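/- Let k ∈ ℤ≥0. The Poincaré series P_{Γ,χ}f_{k,m} is not identically zero on ℍ provided at least one of the following holds: (1) k = 0 and N > 4·2^{1/(m−2)}·√(4^{1/(m−2)} − 1); (2) m = 4 and N > 4/(2^{1/(k+2)} − 2^{−1/(k+2)}); (3) 0 < k ≤ m−4 and N ≥ 4·√(((k+2)/(m−2))·(1 + (k+2)/(m−2))); (4) 0 < m−4 ≤ k and N ≥ 4·√((k/(m−4))·(1 + k/(m−4))). -/

import Mathlib

open Complex MeasureTheory Filter Topology
open scoped Real

set_option autoImplicit false

noncomputable section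

/-- `SL₂(ℤ)`. -/
abbrev SL2Z := Matrix.SpecialLinearGroup (Fin 2) ℤ

/-- The upper half-plane, as a subset of `ℂ`. -/
def UH : Set ℂ := {z : ℂ | 0 < z.im}

/-- The `(i,j)` entry of `γ ∈ SL₂(ℤ)`, as a complex number. -/
def entry (γ : SL2Z) (i j : Fin 2) : ℂ :=
  ((γ : Matrix (Fin 2) (Fin 2) ℤ) i j : ℂ)

/-- The Möbius action of `SL₂(ℤ)` on the upper half-plane (as a map on `ℂ`). -/
def act (γ : SL2Z) (z : ℂ) : ℂ :=
  (entry γ 0 0 * z + entry γ 0 1) / (entry γ 1 0 * z + entry γ 1 1)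

/-- The hyperbolic measure `dv(x+iy) = dx·dy/y²` on the upper half-plane. -/
def hypMeasure : Measure ℂ :=
  ((volume : Measure ℂ).withDensity fun z => ENNReal.ofReal (1 / z.im ^ 2)).restrict UH

/-- A multiplier system on `Γ`: holomorphic square roots `η_γ` of `z ↦ c_γ z + d_γ`
satisfying the cocycle condition. -/
structure IsMultiplierSystem (Γ : Subgroup SL2Z) (η : Γ → ℂ → ℂ) : Prop where
  holo : ∀ γ : Γ, DifferentiableOn ℂ (η γ) UH
  sq : ∀ γ : Γ, ∀ z ∈ UH, η γ z ^ 2 = entry (γ : SL2Z) 1 0 * z + entry (γ : SL2Z) 1 1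
  cocycle : ∀ γ₁ γ₂ : Γ, ∀ z ∈ UH,
    η (γ₁ * γ₂) z = η γ₁ (act (γ₂ : SL2Z) z) * η γ₂ z

/-- `χ` has finite order. -/
def HasFiniteOrderChar (Γ : Subgroup SL2Z) (χ : Γ →* ℂˣ) : Prop :=
  ∃ n : ℕ, 0 < n ∧ ∀ γ : Γ, χ γ ^ n = 1

/-- `f` is a cusp form of weight `m = 5/2 + j` for `(Γ, η, χ)`; here
`η γ z ^ (-(5 + 2j))` is the integer power `η_γ(z)^{-2m}`, and the boundedness of
`‖f‖·(Im z)^{m/2}` on the upper half-plane expresses the vanishing at all cusps. -/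
def IsCuspForm (Γ : Subgroup SL2Z) (η : Γ → ℂ → ℂ) (χ : Γ →* ℂˣ) (m : ℝ) (j : ℕ)
    (f : ℂ → ℂ) : Prop :=
  DifferentiableOn ℂ f UH ∧
  (∀ γ : Γ, ∀ z ∈ UH,
    f (act (γ : SL2Z) z) * η γ z ^ (-(5 + 2 * (j : ℤ))) = (χ γ : ℂ) * f z) ∧
  ∃ C : ℝ, ∀ z ∈ UH, ‖f z‖ * z.im ^ (m / 2) ≤ C

/-- A measurable fundamental domain for the action of `Γ` on the upper half-plane,
with respect to the hyperbolic measure. -/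
def IsFundDom (Γ : Subgroup SL2Z) (F : Set ℂ) : Prop :=
  MeasurableSet F ∧ F ⊆ UH ∧
  hypMeasure (UH \ ⋃ γ : Γ, act (γ : SL2Z) '' F) = 0 ∧
  ∀ γ : Γ, γ ≠ 1 → hypMeasure (F ∩ act (γ : SL2Z) '' F) = 0

/-- `f_{k,m}(z) = (2i)^m (z-i)^k / (z+i)^{m+k}` (principal powers). -/
def fkm (m : ℝ) (k : ℕ) (z : ℂ) : ℂ :=
  (2 * I) ^ (m : ℂ) * (z - I) ^ k / (z + I) ^ ((m : ℂ) + (k : ℂ))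

/-- The term indexed by `γ` of the Poincaré series `P_{Γ,χ} f_{k,m}`;
`η γ z ^ (-(5 + 2j))` is the integer power `η_γ(z)^{-2m}` for `m = 5/2 + j`. -/
def PTerm (Γ : Subgroup SL2Z) (η : Γ → ℂ → ℂ) (χ : Γ →* ℂˣ) (m : ℝ) (j : ℕ) (k : ℕ)
    (γ : Γ) (z : ℂ) : ℂ :=
  (starRingEnd ℂ) (χ γ : ℂ) * fkm m k (act (γ : SL2Z) z) * η γ z ^ (-(5 + 2 * (j : ℤ)))

/-- The Poincaré series `P_{Γ,χ} f_{k,m}`. -/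
def PoincareP (Γ : Subgroup SL2Z) (η : Γ → ℂ → ℂ) (χ : Γ →* ℂˣ) (m : ℝ) (j : ℕ) (k : ℕ)
    (z : ℂ) : ℂ :=
  ∑' γ : Γ, PTerm Γ η χ m j k γ z

/-!
If the Poincaré series of `f` vanishes identically, then each term is minus the sum of the others,
so on a set `S` disjoint from its `Γ`-translates the Petersson mass `∫ |f(z)| (Im z)^{m/2} dv` is
at most the mass outside `S`. A nontrivial element of `Γ(N)` displaces `i` by at least
`2 arsinh (N / 2)`, which makes the ball of radius `arsinh (N / 2)` about `i` such a set. In the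
disc model, with `t = |(z - i) / (z + i)|²`, the mass of `f_{k,m}` is distributed in `t` as the Beta
distribution with parameters `k / 2 + 1` and `m / 2 - 1`, and the ball is
`t < tanh² (arsinh (N / 2) / 2)`. Hence the series is nonzero as soon as this bound exceeds the
median, which is explicit when one of the parameters is `1` and otherwise lies below the mean or
the mode, as one sees by comparing the density with its reflection.
-/

open scoped ENNReal Pointwise UpperHalfPlane

section GroupAction

theorem enorm_le_tsum_enorm_ne_of_tsum_eq_zero {ι E : Type*} [NormedAddCommGroup E]
    [CompleteSpace E] {f : ι → E} (hf : ∑' i, f i = 0) (a : ι) :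
    ‖f a‖ₑ ≤ ∑' i : {i // i ≠ a}, ‖f i‖ₑ := by
  by_cases htop : ∑' i : {i // i ≠ a}, ‖f i‖ₑ = ⊤
  · exact htop ▸ le_top
  have hcompl : Summable fun i : ↥({a}ᶜ : Set ι) ↦ f i :=
    .of_nnnorm (ENNReal.tsum_coe_ne_top_iff_summable.1 htop)
  have hsum : Summable f :=
    summable_subtype_and_compl.1 ⟨(Set.finite_singleton a).summable _, hcompl⟩
  have hsplit := hsum.tsum_subtype_add_tsum_subtype_compl {a}
  rw [hf, tsum_singleton] at hsplit
  rw [eq_neg_of_add_eq_zero_left hsplit, enorm_neg]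
  exact enorm_tsum_le_tsum_enorm

theorem setLIntegral_le_setLIntegral_compl_of_le_tsum_smul {G X : Type*} [Group G] [Countable G]
    [MulAction G X] [MeasurableSpace X] [MeasurableConstSMul G X] (μ : Measure X)
    [SMulInvariantMeasure G X μ] {w : X → ℝ≥0∞} (hw : Measurable w) {S : Set X}
    (hS : MeasurableSet S) (hdisj : ∀ g : G, g ≠ 1 → Disjoint (g • S) S)
    (hle : ∀ x, w x ≤ ∑' g : {g : G // g ≠ 1}, w (g.1 • x)) :
    ∫⁻ x in S, w x ∂μ ≤ ∫⁻ x in Sᶜ, w x ∂μ := by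
  have hpairwise : Pairwise (Function.onFun Disjoint fun g : {g : G // g ≠ 1} ↦ g.1 • S) := by
    intro g h hgh
    have := hdisj (h.1⁻¹ * g.1) fun he ↦ hgh (Subtype.ext (inv_mul_eq_one.1 he).symm)
    rwa [← Set.disjoint_smul_set (a := h.1), smul_smul, mul_inv_cancel_left] at this
  calc ∫⁻ x in S, w x ∂μ
      ≤ ∫⁻ x in S, ∑' g : {g : G // g ≠ 1}, w (g.1 • x) ∂μ := lintegral_mono hle
    _ = ∑' g : {g : G // g ≠ 1}, ∫⁻ x in S, w (g.1 • x) ∂μ :=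
        lintegral_tsum fun g ↦ (hw.comp (measurable_const_smul g.1)).aemeasurable
    _ = ∑' g : {g : G // g ≠ 1}, ∫⁻ x in g.1 • S, w x ∂μ :=
        tsum_congr fun g ↦ (measurePreserving_smul g.1 μ).setLIntegral_comp_emb
          (measurableEmbedding_const_smul g.1) w S
    _ = ∫⁻ x in ⋃ g : {g : G // g ≠ 1}, g.1 • S, w x ∂μ :=
        (lintegral_iUnion (fun g : {g : G // g ≠ 1} ↦ hS.const_smul g.1) hpairwise w).symm
    _ ≤ ∫⁻ x in Sᶜ, w x ∂μ :=
        lintegral_mono_set (Set.iUnion_subset fun g ↦ (hdisj g.1 g.2).subset_compl_right)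

theorem disjoint_smul_ball {G X : Type*} [Group G] [PseudoMetricSpace X] [MulAction G X]
    [IsIsometricSMul G X] {g : G} {x : X} {r : ℝ} (h : 2 * r ≤ dist (g • x) x) :
    Disjoint (g • Metric.ball x r) (Metric.ball x r) := by
  rw [Metric.smul_ball]
  exact Metric.ball_disjoint_ball (by linarith)

end GroupAction

section ModularAction

instance : Countable SL2Z :=
  have : Countable (Matrix (Fin 2) (Fin 2) ℤ) := inferInstanceAs (Countable (Fin 2 → Fin 2 → ℤ))
  Subtype.countable

instance : SMulInvariantMeasure SL2Z ℍ volume :=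
  ⟨fun g _ hs ↦ measure_preimage_smul_of_nullMeasurableSet (μ := (volume : Measure ℍ))
    hs.nullMeasurableSet (Matrix.SpecialLinearGroup.mapGL ℝ g)⟩

instance : IsIsometricSMul SL2Z ℍ :=
  ⟨fun g ↦ isometry_smul ℍ (g.map (Int.castRingHom ℝ))⟩

instance (Γ : Subgroup SL2Z) : IsIsometricSMul Γ ℍ :=
  ⟨fun γ ↦ isometry_smul ℍ (γ : SL2Z)⟩

end ModularAction

section Displacement

theorem sq_le_sq_add_sq_of_dvd {n b c : ℤ} (hb : n ∣ b) (hc : n ∣ c) (h : b ≠ 0 ∨ c ≠ 0) :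
    n ^ 2 ≤ b ^ 2 + c ^ 2 := by
  have sq_le_of_dvd {x : ℤ} (hx : n ∣ x) (hx₀ : x ≠ 0) : n ^ 2 ≤ x ^ 2 :=
    sq_le_sq.2 (Int.le_of_dvd (abs_pos.2 hx₀) ((abs_dvd_abs _ _).2 hx))
  rcases h with h | h
  · linarith [sq_le_of_dvd hb h, sq_nonneg c]
  · linarith [sq_le_of_dvd hc h, sq_nonneg b]

theorem eq_one_or_eq_neg_one_of_offDiag_eq_zero {g : SL2Z} (hb : g 0 1 = 0) (hc : g 1 0 = 0) :
    g = 1 ∨ g = -1 := by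
  have hdet := g.det_coe
  rw [Matrix.det_fin_two, hb, hc, mul_zero, sub_zero] at hdet
  refine (Int.eq_one_or_neg_one_of_mul_eq_one' hdet).imp (fun h ↦ ?_) (fun h ↦ ?_) <;>
    ext i j <;> fin_cases i <;> fin_cases j <;> simp [hb, hc, h]

theorem mul_self_eq_neg_one_of_diag_eq_zero {g : SL2Z} (ha : g 0 0 = 0) (hd : g 1 1 = 0) :
    g * g = -1 := by
  have hdet := g.det_coe
  rw [Matrix.det_fin_two, ha, hd, mul_zero, zero_sub] at hdet
  ext i j
  fin_cases i <;> fin_cases j <;>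
    simp [Matrix.mul_apply, Fin.sum_univ_two, ha, hd] <;> linarith

theorem sq_add_two_le_sum_sq_of_mem_Gamma {N : ℕ} {g : SL2Z} (hg : g ∈ CongruenceSubgroup.Gamma N)
    (hone : g ≠ 1) (hneg : g ≠ -1) (hsq : g * g ≠ -1) :
    (N : ℤ) ^ 2 + 2 ≤ g 0 0 ^ 2 + g 0 1 ^ 2 + g 1 0 ^ 2 + g 1 1 ^ 2 := by
  obtain ⟨ha, hb, hc, hd⟩ := CongruenceSubgroup.Gamma_mem.1 hg
  have hdet := g.det_coe
  rw [Matrix.det_fin_two] at hdet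
  have hoff : (N : ℤ) ^ 2 ≤ g 0 1 ^ 2 + g 1 0 ^ 2 := by
    refine sq_le_sq_add_sq_of_dvd ((ZMod.intCast_zmod_eq_zero_iff_dvd _ _).1 hb)
      ((ZMod.intCast_zmod_eq_zero_iff_dvd _ _).1 hc) ?_
    by_contra! h
    exact (eq_one_or_eq_neg_one_of_offDiag_eq_zero h.1 h.2).elim hone hneg
  have hdiag : 1 ≤ g 0 0 ^ 2 + g 1 1 ^ 2 := by
    simpa using sq_le_sq_add_sq_of_dvd (one_dvd (g 0 0)) (one_dvd (g 1 1)) <| by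
      by_contra! h
      exact hsq (mul_self_eq_neg_one_of_diag_eq_zero h.1 h.2)
  by_cases had : g 0 0 * g 1 1 = 0
  · have hN : N ∣ 1 := by
      have hcast := congrArg (Int.cast : ℤ → ZMod N) had
      rwa [Int.cast_mul, ha, hd, Int.cast_zero, one_mul, ← Nat.cast_one,
        ZMod.natCast_eq_zero_iff] at hcast
    obtain rfl := Nat.dvd_one.1 hN
    push_cast
    nlinarith [sq_nonneg (g 0 1 + g 1 0)]
  · obtain ⟨ha₀, hd₀⟩ := mul_ne_zero_iff.1 had
    have hdiag_a : 0 < g 0 0 ^ 2 := by positivity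
    have hdiag_d : 0 < g 1 1 ^ 2 := by positivity
    linarith

theorem cosh_dist_smul_I_I {R : Type*} [CommRing R] [Algebra R ℝ]
    (g : Matrix.SpecialLinearGroup (Fin 2) R) :
    Real.cosh (dist (g • UpperHalfPlane.I) UpperHalfPlane.I) =
      algebraMap R ℝ (g 0 0 ^ 2 + g 0 1 ^ 2 + g 1 0 ^ 2 + g 1 1 ^ 2) / 2 := by
  have hdet := congrArg (algebraMap R ℝ) ((Matrix.det_fin_two g.1).symm.trans g.det_coe)
  have hcoe : ((g • UpperHalfPlane.I : ℍ) : ℂ) = _ := UpperHalfPlane.coe_specialLinearGroup_apply ..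
  rw [UpperHalfPlane.cosh_dist, dist_eq_norm, Complex.sq_norm, ← UpperHalfPlane.coe_im, hcoe]
  simp only [map_add, map_sub, map_mul, map_pow, map_one, UpperHalfPlane.coe_I,
    UpperHalfPlane.I_im, mul_one] at hdet ⊢
  generalize algebraMap R ℝ (g 0 0) = a at *
  generalize algebraMap R ℝ (g 0 1) = b at *
  generalize algebraMap R ℝ (g 1 0) = c at *
  generalize algebraMap R ℝ (g 1 1) = d at *
  have hden : (c * I + d : ℂ) ≠ 0 := by
    intro h
    have hc : c = 0 := by simpa using congrArg Complex.im h
    have hd : d = 0 := by simpa using congrArg Complex.re h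
    simp [hc, hd] at hdet
  have hnormSq : normSq (c * I + d) = c ^ 2 + d ^ 2 := by
    simp [normSq_apply, sq, add_comm]
  have hpos : 0 < c ^ 2 + d ^ 2 := hnormSq ▸ normSq_pos.2 hden
  have him : ((a * I + b) / (c * I + d)).im = 1 / (c ^ 2 + d ^ 2) := by
    simp [Complex.div_im, hnormSq, ← sub_div, hdet]
  have hsub : (a * I + b) / (c * I + d) - I = ((b + c) + (a - d) * I) / (c * I + d) := by
    rw [div_sub' hden]
    congr 1
    linear_combination (-c : ℂ) * I_sq
  have hnum : normSq ((b + c) + (a - d) * I) = (b + c) ^ 2 + (a - d) ^ 2 := by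
    simp [normSq_apply, sq]
  rw [him, hsub, normSq_div, hnormSq, hnum]
  field_simp
  linear_combination -2 * hdet

theorem two_mul_arsinh_le_dist_smul_I {N : ℕ} {g : SL2Z} (hg : g ∈ CongruenceSubgroup.Gamma N)
    (hone : g ≠ 1) (hneg : g ≠ -1) (hsq : g * g ≠ -1) :
    2 * Real.arsinh (N / 2) ≤ dist (g • UpperHalfPlane.I) UpperHalfPlane.I := by
  have hsum : ((N : ℝ) ^ 2 + 2) ≤ (g 0 0 ^ 2 + g 0 1 ^ 2 + g 1 0 ^ 2 + g 1 1 ^ 2 : ℤ) := mod_cast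
    sq_add_two_le_sum_sq_of_mem_Gamma hg hone hneg hsq
  have hcosh : Real.cosh (2 * Real.arsinh (N / 2)) ≤
      Real.cosh (dist (g • UpperHalfPlane.I) UpperHalfPlane.I) := by
    rw [cosh_dist_smul_I_I, Real.cosh_two_mul, Real.cosh_sq, Real.sinh_arsinh, eq_intCast]
    linarith
  exact le_of_abs_le (Real.cosh_le_cosh.1 hcosh |>.trans_eq (abs_of_nonneg dist_nonneg))

end Displacement

section MultiplierSystem

variable {Γ : Subgroup SL2Z} {η : Γ → ℂ → ℂ}

theorem I_mem_UH : I ∈ UH := by simp [UH]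

theorem IsMultiplierSystem.one_apply (hη : IsMultiplierSystem Γ η) {z : ℂ} (hz : z ∈ UH) :
    η 1 z = 1 := by
  have hact : act ((1 : Γ) : SL2Z) z = z := by simp [act, entry]
  calc η 1 z = η 1 z * η 1 z := by simpa only [hact, mul_one] using hη.cocycle 1 1 z hz
    _ = 1 := by simp [← pow_two, hη.sq 1 z hz, entry]

theorem IsMultiplierSystem.coe_ne_neg_one (hη : IsMultiplierSystem Γ η) (γ : Γ) :
    (γ : SL2Z) ≠ -1 := by
  intro h
  have hI : I ∈ UH := I_mem_UH
  have hact : act (γ : SL2Z) I = I := by simp [act, entry, h]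
  have hγ : γ * γ = 1 := by ext1; simp [h]
  have hcocycle := hη.cocycle γ γ I hI
  rw [hact, hγ, hη.one_apply hI, ← pow_two, hη.sq γ I hI] at hcocycle
  norm_num [entry, h, Complex.ext_iff] at hcocycle

theorem IsMultiplierSystem.disjoint_smul_ball (hη : IsMultiplierSystem Γ η) {N : ℕ}
    (hΓ : Γ ≤ CongruenceSubgroup.Gamma N) {γ : Γ} (hγ : γ ≠ 1) :
    Disjoint (γ • Metric.ball UpperHalfPlane.I (Real.arsinh (N / 2)))
      (Metric.ball UpperHalfPlane.I (Real.arsinh (N / 2))) :=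
  _root_.disjoint_smul_ball <| two_mul_arsinh_le_dist_smul_I (hΓ γ.2)
    (fun h ↦ hγ (Subtype.ext h)) (hη.coe_ne_neg_one γ) (hη.coe_ne_neg_one (γ * γ))

end MultiplierSystem

section Petersson

/-- The `γ`-term `conj (χ γ) f(γ.z) η_γ(z)^{-n}` of the Poincaré series of `f` in weight `n / 2`;
the weight is encoded by the integer `n` so that only integer powers of `η_γ` occur. -/
def poincareTerm (Γ : Subgroup SL2Z) (η : Γ → ℂ → ℂ) (χ : Γ →* ℂˣ) (n : ℤ) (f : ℂ → ℂ) (γ : Γ)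
    (z : ℂ) : ℂ :=
  starRingEnd ℂ (χ γ) * f (act γ z) * η γ z ^ (-n)

/-- The Poincaré series of `f` in weight `n / 2`. -/
def poincareSeries (Γ : Subgroup SL2Z) (η : Γ → ℂ → ℂ) (χ : Γ →* ℂˣ) (n : ℤ) (f : ℂ → ℂ)
    (z : ℂ) : ℂ :=
  ∑' γ, poincareTerm Γ η χ n f γ z

/-- The size `|f(z)| (Im z)^{m/2}` of `f` in the Petersson metric of weight `m`, valued in
`ℝ≥0∞` so that it can be integrated and summed without convergence hypotheses. -/
def peterssonEnorm (m : ℝ) (f : ℂ → ℂ) (z : ℍ) : ℝ≥0∞ :=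
  ‖f z‖ₑ * ENNReal.ofReal (z.im ^ (m / 2))

theorem measurable_peterssonEnorm (m : ℝ) {f : ℂ → ℂ} (hf : Measurable f) :
    Measurable (peterssonEnorm m f) :=
  (hf.comp UpperHalfPlane.measurable_coe).enorm.mul
    (UpperHalfPlane.continuous_im.measurable.pow_const (m / 2)).ennreal_ofReal

theorem coe_smul_eq_act (g : SL2Z) (z : ℍ) : ((g • z : ℍ) : ℂ) = act g z := by
  rw [UpperHalfPlane.coe_specialLinearGroup_apply]
  simp [act, entry]

variable {Γ : Subgroup SL2Z} {η : Γ → ℂ → ℂ} {χ : Γ →* ℂˣ} {m : ℝ} {n : ℤ} {f : ℂ → ℂ}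

theorem IsMultiplierSystem.im_smul (hη : IsMultiplierSystem Γ η) (γ : Γ) (z : ℍ) :
    (γ • z).im = z.im / ‖η γ z‖ ^ 4 := by
  have hsq : ‖η γ z‖ ^ 2 = ‖UpperHalfPlane.denom (γ : SL2Z) z‖ := by
    rw [← norm_pow, hη.sq γ z z.im_pos, ModularGroup.denom_apply]
    simp [entry]
  rw [show (4 : ℕ) = 2 * 2 from rfl, pow_mul, hsq, ← normSq_eq_norm_sq]
  exact ModularGroup.im_smul_eq_div_normSq (γ : SL2Z) z

theorem IsMultiplierSystem.enorm_poincareTerm_mul (hη : IsMultiplierSystem Γ η)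
    (hχ : ∀ γ, ‖(χ γ : ℂ)‖ = 1) (hn : (n : ℝ) = 2 * m) (γ : Γ) (z : ℍ) :
    ‖poincareTerm Γ η χ n f γ z‖ₑ * ENNReal.ofReal (z.im ^ (m / 2)) =
      peterssonEnorm m f (γ • z) := by
  have hpow : (γ • z).im ^ (m / 2) = ‖η γ z‖ ^ (-n) * z.im ^ (m / 2) := by
    rw [hη.im_smul, Real.div_rpow z.im_pos.le (by positivity), ← Real.rpow_natCast,
      ← Real.rpow_mul (norm_nonneg _), div_eq_mul_inv, mul_comm, zpow_neg, ← Real.rpow_intCast, hn]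
    congr 3
    push_cast
    ring
  have hcoe : ((γ • z : ℍ) : ℂ) = act γ z := coe_smul_eq_act γ z
  rw [peterssonEnorm, poincareTerm, hpow, hcoe, ENNReal.ofReal_mul (by positivity), ← norm_zpow,
    ofReal_norm, enorm_mul, enorm_mul, ← mul_assoc, ← ofReal_norm (starRingEnd ℂ _),
    RCLike.norm_conj, hχ, ENNReal.ofReal_one, one_mul]

theorem IsMultiplierSystem.exists_poincareSeries_ne_zero (hη : IsMultiplierSystem Γ η)
    (hχ : ∀ γ, ‖(χ γ : ℂ)‖ = 1) (hn : (n : ℝ) = 2 * m) (hf : Measurable f) {S : Set ℍ}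
    (hS : MeasurableSet S) (hdisj : ∀ γ : Γ, γ ≠ 1 → Disjoint (γ • S) S)
    (hlt : ∫⁻ z in Sᶜ, peterssonEnorm m f z < ∫⁻ z in S, peterssonEnorm m f z) :
    ∃ z ∈ UH, poincareSeries Γ η χ n f z ≠ 0 := by
  by_contra! hzero
  refine hlt.not_ge <| setLIntegral_le_setLIntegral_compl_of_le_tsum_smul volume
    (measurable_peterssonEnorm m hf) hS hdisj fun z ↦ ?_
  have hle := enorm_le_tsum_enorm_ne_of_tsum_eq_zero (hzero z z.im_pos) (1 : Γ)
  calc peterssonEnorm m f z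
      = ‖poincareTerm Γ η χ n f 1 z‖ₑ * ENNReal.ofReal (z.im ^ (m / 2)) := by
        rw [hη.enorm_poincareTerm_mul hχ hn, one_smul]
    _ ≤ (∑' γ : {γ : Γ // γ ≠ 1}, ‖poincareTerm Γ η χ n f γ z‖ₑ) *
          ENNReal.ofReal (z.im ^ (m / 2)) := by gcongr
    _ = ∑' γ : {γ : Γ // γ ≠ 1}, peterssonEnorm m f (γ.1 • z) := by
        simp only [← ENNReal.tsum_mul_right, hη.enorm_poincareTerm_mul hχ hn]

end Petersson

section DiscModel

/-- The Cayley transform, mapping the upper half-plane to the unit disc and `I` to `0`. -/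
def cayley (z : ℂ) : ℂ := (z - I) / (z + I)

/-- The inverse Cayley transform, mapping the unit disc to the upper half-plane. -/
def cayleySymm (w : ℂ) : ℂ := I * (1 + w) / (1 - w)

theorem measurable_cayley : Measurable cayley := by unfold cayley; fun_prop

theorem add_I_ne_zero {z : ℂ} (hz : z ∈ UH) : z + I ≠ 0 := by
  intro h
  have him : z.im + 1 = 0 := by simpa using congrArg Complex.im h
  linarith [show 0 < z.im from hz]

theorem one_sub_ne_zero_of_mem_ball {w : ℂ} (hw : w ∈ Metric.ball (0 : ℂ) 1) : 1 - w ≠ 0 := by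
  rintro h
  simp [← sub_eq_zero.1 h] at hw

theorem one_sub_sq_norm_cayley {z : ℂ} (hz : z ∈ UH) :
    1 - ‖cayley z‖ ^ 2 = 4 * z.im / ‖z + I‖ ^ 2 := by
  have hne : ‖z + I‖ ≠ 0 := norm_ne_zero_iff.2 (add_I_ne_zero hz)
  rw [cayley, norm_div, div_pow, one_sub_div (pow_ne_zero 2 hne)]
  congr 1
  rw [← normSq_eq_norm_sq, ← normSq_eq_norm_sq, normSq_apply, normSq_apply]
  simp only [add_re, I_re, add_zero, add_im, I_im, sub_re, sub_zero, sub_im,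
    add_sub_add_left_eq_sub]
  ring

theorem cayley_mem_ball {z : ℂ} (hz : z ∈ UH) : cayley z ∈ Metric.ball (0 : ℂ) 1 := by
  have hpos : 0 < 1 - ‖cayley z‖ ^ 2 := by
    have him : 0 < z.im := hz
    have hnorm : 0 < ‖z + I‖ := norm_pos_iff.2 (add_I_ne_zero hz)
    rw [one_sub_sq_norm_cayley hz]
    positivity
  rw [mem_ball_zero_iff, ← sq_lt_one_iff₀ (norm_nonneg _)]
  linarith

theorem cayley_cayleySymm {w : ℂ} (hw : 1 - w ≠ 0) : cayley (cayleySymm w) = w := by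
  have hsub : I * (1 + w) / (1 - w) - I = 2 * I * w / (1 - w) := by field_simp; ring
  have hadd : I * (1 + w) / (1 - w) + I = 2 * I / (1 - w) := by field_simp; ring
  rw [cayley, cayleySymm, hsub, hadd, div_div_div_cancel_right₀ hw]
  field_simp

theorem cayleySymm_cayley {z : ℂ} (hz : z ∈ UH) : cayleySymm (cayley z) = z := by
  have hne := add_I_ne_zero hz
  have hadd : 1 + (z - I) / (z + I) = 2 * z / (z + I) := by field_simp; ring
  have hsub : 1 - (z - I) / (z + I) = 2 * I / (z + I) := by field_simp; ring
  rw [cayley, cayleySymm, hadd, hsub, mul_div_assoc', div_div_div_cancel_right₀ hne]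
  field_simp

theorem im_cayleySymm {w : ℂ} : (cayleySymm w).im = (1 - ‖w‖ ^ 2) / ‖1 - w‖ ^ 2 := by
  rw [cayleySymm, ← normSq_eq_norm_sq, ← normSq_eq_norm_sq, div_im, ← sub_div]
  congr 1
  simp only [mul_im, I_re, add_im, one_im, zero_add, zero_mul, I_im, add_re, one_re, one_mul,
    sub_re, mul_re, zero_sub, sub_im, mul_neg, neg_mul, neg_neg, normSq_apply]
  ring

theorem cayleySymm_mem_UH {w : ℂ} (hw : w ∈ Metric.ball (0 : ℂ) 1) : cayleySymm w ∈ UH := by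
  have hden : 0 < ‖1 - w‖ := norm_pos_iff.2 (one_sub_ne_zero_of_mem_ball hw)
  have hnum : 0 < 1 - ‖w‖ ^ 2 :=
    sub_pos.2 ((sq_lt_one_iff₀ (norm_nonneg w)).2 (mem_ball_zero_iff.1 hw))
  rw [UH, Set.mem_ofPred_eq, im_cayleySymm]
  positivity

theorem bijOn_cayleySymm : Set.BijOn cayleySymm (Metric.ball 0 1) UH :=
  Set.InvOn.bijOn (f' := cayley)
    ⟨fun _ hw ↦ cayley_cayleySymm (one_sub_ne_zero_of_mem_ball hw), fun _ ↦ cayleySymm_cayley⟩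
    (fun _ ↦ cayleySymm_mem_UH) (fun _ ↦ cayley_mem_ball)

theorem hasDerivAt_cayleySymm {w : ℂ} (hw : 1 - w ≠ 0) :
    HasDerivAt cayleySymm (2 * I / (1 - w) ^ 2) w := by
  have hnum : HasDerivAt (fun w : ℂ ↦ I * (1 + w)) (I * 1) w :=
    ((hasDerivAt_id w).const_add 1).const_mul I
  have hden : HasDerivAt (fun w : ℂ ↦ 1 - w) (-1) w := (hasDerivAt_id w).const_sub 1
  refine (hnum.div hden hw).congr_deriv ?_
  congr 1
  ring

theorem lintegral_image_eq_lintegral_sq_norm_deriv_mul {s : Set ℂ} {f f' : ℂ → ℂ}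
    (hs : MeasurableSet s) (hf' : ∀ z ∈ s, HasDerivAt f (f' z) z) (hf : Set.InjOn f s)
    (g : ℂ → ℝ≥0∞) :
    ∫⁻ z in f '' s, g z = ∫⁻ z in s, ENNReal.ofReal (‖f' z‖ ^ 2) * g (f z) := by
  rw [lintegral_image_eq_lintegral_abs_det_fderiv_mul volume hs
    (fun z hz ↦ ((hf' z hz).hasFDerivAt.restrictScalars ℝ).hasFDerivWithinAt) hf g]
  refine setLIntegral_congr_fun hs fun z _ ↦ ?_
  congr 2
  rw [ContinuousLinearMap.det]
  simp [LinearMap.det_restrictScalars, Algebra.norm_complex_eq, normSq_eq_norm_sq]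

theorem map_coe_volume_eq_hypMeasure :
    (volume : Measure ℍ).map UpperHalfPlane.coe = hypMeasure := by
  ext s hs
  have hUH : MeasurableSet UH := measurableSet_lt measurable_const measurable_im
  have himage : UpperHalfPlane.coe '' (UpperHalfPlane.coe ⁻¹' s) = s ∩ UH := by
    rw [Set.image_preimage_eq_inter_range, UpperHalfPlane.range_coe]
    rfl
  rw [Measure.map_apply UpperHalfPlane.measurable_coe hs, UpperHalfPlane.volume_eq_lintegral,
    himage, hypMeasure, Measure.restrict_apply hs, withDensity_apply _ (hs.inter hUH)]
  refine lintegral_congr fun z ↦ ?_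
  rw [← ENNReal.ofReal_coe_nnreal]
  simp

theorem map_sq_norm_volume_ball :
    ((volume : Measure ℂ).restrict (Metric.ball 0 1)).map (fun w ↦ ‖w‖ ^ 2) =
      ENNReal.ofReal π • volume.restrict (Set.Ioo 0 1) := by
  have : IsFiniteMeasure ((volume : Measure ℂ).restrict (Metric.ball 0 1)) :=
    isFiniteMeasure_restrict.2 measure_ball_lt_top.ne
  refine Measure.ext_of_Iic _ _ fun a ↦ ?_
  rw [Measure.map_apply (by fun_prop) measurableSet_Iic,
    Measure.restrict_apply (measurableSet_Iic.preimage (by fun_prop)), Measure.smul_apply,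
    Measure.restrict_apply measurableSet_Iic, smul_eq_mul]
  rcases lt_or_ge a 0 with ha | ha
  · have hdisc : (fun w : ℂ ↦ ‖w‖ ^ 2) ⁻¹' Set.Iic a = ∅ :=
      Set.eq_empty_of_forall_notMem fun w hw ↦ (ha.trans_le (sq_nonneg ‖w‖)).not_ge hw
    have hinter : Set.Iic a ∩ Set.Ioo 0 1 = ∅ :=
      Set.eq_empty_of_forall_notMem fun x hx ↦ (ha.trans hx.2.1).not_ge hx.1
    simp [hdisc, hinter]
  rcases lt_or_ge a 1 with ha₁ | ha₁
  · have hdisc : (fun w : ℂ ↦ ‖w‖ ^ 2) ⁻¹' Set.Iic a ∩ Metric.ball 0 1 =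
        Metric.closedBall 0 √a := by
      ext w
      simp only [Set.mem_inter_iff, Set.mem_preimage, Set.mem_Iic, mem_ball_zero_iff,
        mem_closedBall_zero_iff, Real.le_sqrt (norm_nonneg w) ha]
      exact and_iff_left_of_imp fun h ↦ (sq_lt_one_iff₀ (norm_nonneg w)).1 (h.trans_lt ha₁)
    have hinter : Set.Iic a ∩ Set.Ioo 0 1 = Set.Ioc 0 a := by
      ext x
      simp only [Set.mem_inter_iff, Set.mem_Iic, Set.mem_Ioo, Set.mem_Ioc]
      grind
    rw [hdisc, hinter, Complex.volume_closedBall, Real.volume_Ioc, sub_zero,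
      ← ENNReal.ofReal_pow (Real.sqrt_nonneg a), Real.sq_sqrt ha, mul_comm,
      ← NNReal.coe_real_pi, ENNReal.ofReal_coe_nnreal]
  · have hdisc : (fun w : ℂ ↦ ‖w‖ ^ 2) ⁻¹' Set.Iic a ∩ Metric.ball 0 1 = Metric.ball 0 1 :=
      Set.inter_eq_right.2 fun w hw ↦
        ((sq_lt_one_iff₀ (norm_nonneg w)).2 (mem_ball_zero_iff.1 hw)).le.trans ha₁
    have hinter : Set.Iic a ∩ Set.Ioo 0 1 = Set.Ioo 0 1 :=
      Set.inter_eq_right.2 fun x hx ↦ hx.2.le.trans ha₁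
    simp [hdisc, hinter, ← NNReal.coe_real_pi]

theorem lintegral_comp_sq_norm_cayley {φ : ℝ → ℝ≥0∞} (hφ : Measurable φ) :
    ∫⁻ z : ℍ, φ (‖cayley z‖ ^ 2) =
      ENNReal.ofReal π * ∫⁻ x in Set.Ioo 0 1, ENNReal.ofReal (4 / (1 - x) ^ 2) * φ x := by
  have hUH : MeasurableSet UH := measurableSet_lt measurable_const measurable_im
  have hcayley : Measurable fun z ↦ φ (‖cayley z‖ ^ 2) :=
    hφ.comp (measurable_cayley.norm.pow_const 2)
  calc ∫⁻ z : ℍ, φ (‖cayley z‖ ^ 2)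
      = ∫⁻ z, φ (‖cayley z‖ ^ 2) ∂hypMeasure := by
        rw [← map_coe_volume_eq_hypMeasure, lintegral_map hcayley UpperHalfPlane.measurable_coe]
    _ = ∫⁻ z in UH, ENNReal.ofReal (1 / z.im ^ 2) * φ (‖cayley z‖ ^ 2) := by
        rw [hypMeasure, restrict_withDensity hUH,
          lintegral_withDensity_eq_lintegral_mul _ (by fun_prop) hcayley]
        rfl
    _ = ∫⁻ w in Metric.ball (0 : ℂ) 1, ENNReal.ofReal (4 / (1 - ‖w‖ ^ 2) ^ 2) * φ (‖w‖ ^ 2) := by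
        rw [← bijOn_cayleySymm.image_eq, lintegral_image_eq_lintegral_sq_norm_deriv_mul
          measurableSet_ball (fun w hw ↦ hasDerivAt_cayleySymm (one_sub_ne_zero_of_mem_ball hw))
          bijOn_cayleySymm.injOn]
        refine setLIntegral_congr_fun measurableSet_ball fun w hw ↦ ?_
        have hne := one_sub_ne_zero_of_mem_ball hw
        have hnorm : ‖1 - w‖ ≠ 0 := norm_ne_zero_iff.2 hne
        rw [cayley_cayleySymm hne, ← mul_assoc, ← ENNReal.ofReal_mul (by positivity),
          im_cayleySymm]
        congr 2
        have hball : 1 - ‖w‖ ^ 2 ≠ 0 :=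
          (sub_pos.2 ((sq_lt_one_iff₀ (norm_nonneg w)).2 (mem_ball_zero_iff.1 hw))).ne'
        simp only [norm_div, norm_mul, norm_pow, norm_I, Complex.norm_ofNat]
        field_simp
        norm_num
    _ = _ := by
        rw [← lintegral_map (f := fun x ↦ ENNReal.ofReal (4 / (1 - x) ^ 2) * φ x)
          (g := fun w : ℂ ↦ ‖w‖ ^ 2) (by fun_prop) (by fun_prop), map_sq_norm_volume_ball,
          lintegral_smul_measure, smul_eq_mul]

end DiscModel

section SignIntegral

variable {f : ℝ → ℝ} {p : ℝ}

theorem integral_mul_nonneg_of_odd {φ : ℝ → ℝ} (hφ : ∀ x, φ (2 * p - x) = -φ x)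
    (hint : Integrable fun x ↦ φ x * f x)
    (h : ∀ s > 0, 0 ≤ φ (p + s) * (f (p + s) - f (p - s))) : 0 ≤ ∫ x, φ x * f x := by
  have hreflect : ∫ x, φ x * f (2 * p - x) = -∫ x, φ x * f x := by
    rw [← integral_neg, ← integral_sub_left_eq_self (fun x ↦ -(φ x * f x)) volume (2 * p)]
    simp only [hφ, neg_mul, neg_neg]
  have hint' : Integrable fun x ↦ φ x * f (2 * p - x) :=
    (hint.comp_sub_left (2 * p)).neg.congr (ae_of_all _ fun x ↦ by simp [hφ])
  have hpointwise (x : ℝ) : 0 ≤ φ x * f x - φ x * f (2 * p - x) := by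
    rcases lt_trichotomy x p with hx | rfl | hx
    · have hs := h (p - x) (sub_pos.2 hx)
      rw [show p + (p - x) = 2 * p - x by ring, show p - (p - x) = x by ring, hφ] at hs
      linarith
    · rw [show 2 * x - x = x by ring, sub_self]
    · have hs := h (x - p) (sub_pos.2 hx)
      rw [show p + (x - p) = x by ring, show p - (x - p) = 2 * p - x by ring] at hs
      linarith
  have hdouble : 0 ≤ ∫ x, (φ x * f x - φ x * f (2 * p - x)) := integral_nonneg hpointwise
  rw [integral_sub hint hint', hreflect] at hdouble
  linarith

theorem measurable_sign_sub (p : ℝ) : Measurable fun x ↦ Real.sign (x - p) :=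
  (Measurable.ite measurableSet_Iio measurable_const
    (Measurable.ite measurableSet_Ioi measurable_const measurable_const)).comp
      (measurable_id.sub_const p)

theorem integrable_sign_sub_mul (hf : Integrable f) (p : ℝ) :
    Integrable fun x ↦ Real.sign (x - p) * f x := by
  refine hf.bdd_mul (c := 1) (measurable_sign_sub p).aestronglyMeasurable (ae_of_all _ fun x ↦ ?_)
  rcases Real.sign_apply_eq (x - p) with h | h | h <;> simp [h]

theorem sign_reflection_sub (p x : ℝ) : Real.sign (2 * p - x - p) = -Real.sign (x - p) := by
  rw [← Real.sign_neg]
  congr 1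
  ring

theorem integral_sign_sub_mul_nonpos_of_le (hf : Integrable f)
    (h : ∀ s > 0, f (p + s) ≤ f (p - s)) : ∫ x, Real.sign (x - p) * f x ≤ 0 := by
  have hodd := integral_mul_nonneg_of_odd (p := p) (f := f) (φ := fun x ↦ -Real.sign (x - p))
    (fun x ↦ by rw [sign_reflection_sub])
    (by simp only [neg_mul]; exact (integrable_sign_sub_mul hf p).neg)
    (fun s hs ↦ by
      rw [add_sub_cancel_left, Real.sign_of_pos hs]
      linarith [h s hs])
  simp only [neg_mul, integral_neg] at hodd
  linarith

theorem integral_sign_sub_mul_nonpos_of_crossing {s₀ : ℝ} (hf : Integrable f)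
    (hxf : Integrable fun x ↦ (x - p) * f x) (hmean : ∫ x, (x - p) * f x = 0) (hs₀ : 0 < s₀)
    (hle : ∀ s, 0 < s → s < s₀ → f (p + s) ≤ f (p - s))
    (hge : ∀ s > s₀, f (p - s) ≤ f (p + s)) : ∫ x, Real.sign (x - p) * f x ≤ 0 := by
  -- On `x > p` the odd weight `φ` changes sign exactly where `f (p + s) - f (p - s)` does.
  let φ (x : ℝ) : ℝ := (x - p) - s₀ * Real.sign (x - p)
  have hφ_mul : (fun x ↦ φ x * f x) =
      fun x ↦ (x - p) * f x - s₀ * (Real.sign (x - p) * f x) := by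
    ext x
    ring
  have hsign := (integrable_sign_sub_mul hf p).const_mul s₀
  have hodd : 0 ≤ ∫ x, φ x * f x := by
    refine integral_mul_nonneg_of_odd (p := p) (fun x ↦ ?_) (hφ_mul ▸ hxf.sub hsign)
      fun s hs ↦ ?_
    · simp only [φ, sign_reflection_sub]
      ring
    · simp only [φ, add_sub_cancel_left, Real.sign_of_pos hs, mul_one]
      rcases lt_trichotomy s s₀ with h | rfl | h
      · nlinarith [hle s hs h]
      · simp
      · nlinarith [hge s h]
  rw [hφ_mul, integral_sub hxf hsign, hmean, integral_const_mul] at hodd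
  exact nonpos_of_mul_nonpos_right (by linarith) hs₀

theorem integral_sign_sub {μ : Measure ℝ} [IsFiniteMeasure μ] :
    ∫ x, Real.sign (x - p) ∂μ = μ.real (Set.Ioi p) - μ.real (Set.Iio p) := by
  have hsign (x : ℝ) : Real.sign (x - p) =
      (Set.Ioi p).indicator 1 x - (Set.Iio p).indicator 1 x := by
    rcases lt_trichotomy x p with hx | rfl | hx
    · simp [Real.sign_of_neg (sub_neg.2 hx), hx, hx.le]
    · simp
    · simp [Real.sign_of_pos (sub_pos.2 hx), hx, hx.le]
  rw [integral_congr_ae (ae_of_all μ hsign), integral_sub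
    ((integrable_const 1).indicator measurableSet_Ioi)
    ((integrable_const 1).indicator measurableSet_Iio),
    integral_indicator_one measurableSet_Ioi, integral_indicator_one measurableSet_Iio]

theorem exists_threshold_of_monotoneOn_of_antitoneOn {H : ℝ → ℝ} {c r : ℝ} (hc : 0 < c)
    (hr : 0 < r) (hH₀ : H 0 = 0) (hmono : MonotoneOn H (Set.Ico 0 r ∩ Set.Iic c))
    (hanti : AntitoneOn H (Set.Ico 0 r ∩ Set.Ici c)) :
    ∃ s₀ ∈ Set.Ioc 0 r, (∀ s, 0 < s → s < s₀ → 0 ≤ H s) ∧ ∀ s, s₀ < s → s < r → H s ≤ 0 := by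
  let T : Set ℝ := {s ∈ Set.Ico 0 r | 0 ≤ H s}
  have hT : BddAbove T := ⟨r, fun s hs ↦ hs.1.2.le⟩
  have hstart {s : ℝ} (hs : s ∈ Set.Ico 0 r) (hsc : s ≤ c) : s ∈ T :=
    ⟨hs, hH₀ ▸ hmono ⟨⟨le_rfl, hr⟩, hc.le⟩ ⟨hs, hsc⟩ hs.1⟩
  have hmin : min c (r / 2) ∈ T :=
    hstart ⟨by positivity, (min_le_right _ _).trans_lt (half_lt_self hr)⟩ (min_le_left _ _)
  refine ⟨sSup T, ⟨lt_of_lt_of_le (by positivity) (le_csSup hT hmin),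
    csSup_le ⟨_, hmin⟩ fun s hs ↦ hs.1.2.le⟩, fun s hs hlt ↦ ?_, fun s hlt hsr ↦ ?_⟩
  · obtain ⟨s', hs', hss'⟩ := exists_lt_of_lt_csSup ⟨_, hmin⟩ hlt
    have hsr : s ∈ Set.Ico 0 r := ⟨hs.le, hss'.trans hs'.1.2⟩
    rcases le_total s c with hsc | hcs
    · exact (hstart hsr hsc).2
    · exact hs'.2.trans (hanti ⟨hsr, hcs⟩ ⟨hs'.1, hcs.trans hss'.le⟩ hss'.le)
  · have hs : 0 ≤ s := hmin.1.1.trans ((le_csSup hT hmin).trans hlt.le)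
    by_contra! hpos
    exact (le_csSup hT ⟨⟨hs, hsr⟩, hpos.le⟩).not_gt hlt

end SignIntegral

section BetaDistribution

open ProbabilityTheory

variable {α β : ℝ}

theorem betaPDFReal_nonneg (hα : 0 < α) (hβ : 0 < β) (x : ℝ) : 0 ≤ betaPDFReal α β x := by
  by_cases hx : 0 < x ∧ x < 1
  · exact (betaPDFReal_pos hx.1 hx.2 hα hβ).le
  · rw [betaPDFReal, if_neg hx]

theorem betaPDFReal_of_nonpos {x : ℝ} (hx : x ≤ 0) : betaPDFReal α β x = 0 :=
  if_neg fun h ↦ h.1.not_ge hx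

theorem betaPDFReal_of_one_le {x : ℝ} (hx : 1 ≤ x) : betaPDFReal α β x = 0 :=
  if_neg fun h ↦ h.2.not_ge hx

theorem measurable_betaPDF (α β : ℝ) : Measurable (betaPDF α β) :=
  (measurable_betaPDFReal α β).ennreal_ofReal

theorem integral_betaMeasure (hα : 0 < α) (hβ : 0 < β) (g : ℝ → ℝ) :
    ∫ x, g x ∂betaMeasure α β = ∫ x, g x * betaPDFReal α β x := by
  rw [betaMeasure, integral_withDensity_eq_integral_toReal_smul (measurable_betaPDF α β)
    (ae_of_all _ fun x ↦ ENNReal.ofReal_lt_top)]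
  refine integral_congr_ae (ae_of_all _ fun x ↦ ?_)
  simp only [betaPDF, ENNReal.toReal_ofReal (betaPDFReal_nonneg hα hβ x), smul_eq_mul, mul_comm]

theorem integrable_betaPDFReal (hα : 0 < α) (hβ : 0 < β) : Integrable (betaPDFReal α β) := by
  rw [← lintegral_ofReal_ne_top_iff_integrable
    (measurable_betaPDFReal α β).aestronglyMeasurable
    (ae_of_all _ (betaPDFReal_nonneg hα hβ))]
  exact (lintegral_betaPDF_eq_one hα hβ).trans_ne ENNReal.one_ne_top

theorem integral_betaPDFReal (hα : 0 < α) (hβ : 0 < β) : ∫ x, betaPDFReal α β x = 1 := by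
  have := isProbabilityMeasureBeta hα hβ
  simpa using (integral_betaMeasure hα hβ 1).symm

theorem mul_betaPDFReal (hα : 0 < α) (hβ : 0 < β) (x : ℝ) :
    x * betaPDFReal α β x = α / (α + β) * betaPDFReal (α + 1) β x := by
  by_cases hx : 0 < x ∧ x < 1
  · have hbeta : beta (α + 1) β = α / (α + β) * beta α β := by
      have hΓ := (Real.Gamma_pos_of_pos (add_pos hα hβ)).ne'
      rw [beta, beta, Real.Gamma_add_one hα.ne', add_right_comm,
        Real.Gamma_add_one (add_pos hα hβ).ne']
      field_simp
    have hne := (beta_pos hα hβ).ne'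
    rw [betaPDFReal, betaPDFReal, if_pos hx, if_pos hx, hbeta, add_sub_right_comm,
      Real.rpow_add_one hx.1.ne']
    set B := beta α β
    field_simp
  · rw [betaPDFReal, betaPDFReal, if_neg hx, if_neg hx, mul_zero, mul_zero]

theorem integrable_sub_mul_betaPDFReal (hα : 0 < α) (hβ : 0 < β) (p : ℝ) :
    Integrable fun x ↦ (x - p) * betaPDFReal α β x := by
  simp only [sub_mul, mul_betaPDFReal hα hβ]
  exact ((integrable_betaPDFReal (by positivity) hβ).const_mul _).sub
    ((integrable_betaPDFReal hα hβ).const_mul p)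

theorem integral_sub_mean_mul_betaPDFReal (hα : 0 < α) (hβ : 0 < β) :
    ∫ x, (x - α / (α + β)) * betaPDFReal α β x = 0 := by
  have hα' : 0 < α + 1 := by positivity
  simp only [sub_mul, mul_betaPDFReal hα hβ]
  rw [integral_sub ((integrable_betaPDFReal hα' hβ).const_mul _)
    ((integrable_betaPDFReal hα hβ).const_mul _), integral_const_mul, integral_const_mul,
    integral_betaPDFReal hα' hβ, integral_betaPDFReal hα hβ, sub_self]

theorem betaMeasure_Ioi_le_Iio_iff (hα : 0 < α) (hβ : 0 < β) {p : ℝ} :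
    betaMeasure α β (Set.Ioi p) ≤ betaMeasure α β (Set.Iio p) ↔
      ∫ x, Real.sign (x - p) * betaPDFReal α β x ≤ 0 := by
  have := isProbabilityMeasureBeta hα hβ
  rw [← integral_betaMeasure hα hβ, integral_sign_sub, sub_nonpos, measureReal_def,
    measureReal_def, ENNReal.toReal_le_toReal (measure_ne_top _ _) (measure_ne_top _ _)]

theorem betaMeasure_Ici_lt_Iio (hα : 0 < α) (hβ : 0 < β) {M t : ℝ} (hM₀ : 0 ≤ M) (hM₁ : M < 1)
    (hMt : M < t) (h : betaMeasure α β (Set.Ioi M) ≤ betaMeasure α β (Set.Iio M)) :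
    betaMeasure α β (Set.Ici t) < betaMeasure α β (Set.Iio t) := by
  have := isProbabilityMeasureBeta hα hβ
  have hpos : 0 < betaMeasure α β (Set.Ioo M t) := by
    rw [betaMeasure, withDensity_apply _ measurableSet_Ioo,
      setLIntegral_pos_iff (measurable_betaPDF α β)]
    refine lt_of_lt_of_le ?_ (measure_mono (s := Set.Ioo M (min t 1)) fun x hx ↦
      ⟨?_, hx.1, hx.2.trans_le (min_le_left t 1)⟩)
    · rw [Real.volume_Ioo, ENNReal.ofReal_pos, sub_pos]
      exact lt_min hMt hM₁
    · exact (ENNReal.ofReal_pos.2 (betaPDFReal_pos (hM₀.trans_lt hx.1)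
        (hx.2.trans_le (min_le_right t 1)) hα hβ)).ne'
  calc betaMeasure α β (Set.Ici t)
      < betaMeasure α β (Set.Ici t) + betaMeasure α β (Set.Ioo M t) :=
        ENNReal.lt_add_right (measure_ne_top _ _) hpos.ne'
    _ = betaMeasure α β (Set.Ioi M) := by
        rw [add_comm, ← measure_union (Set.disjoint_left.2 fun x hx ↦ hx.2.not_ge)
          measurableSet_Ici, Set.Ioo_union_Ici_eq_Ioi hMt]
    _ ≤ betaMeasure α β (Set.Iio M) := h
    _ ≤ betaMeasure α β (Set.Iio t) := measure_mono (Set.Iio_subset_Iio hMt.le)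

end BetaDistribution

section BetaMedian

open ProbabilityTheory

variable {α β p s : ℝ}

theorem hasDerivAt_log_betaPDFReal (hα : 0 < α) (hβ : 0 < β) {x : ℝ} (hx : x ∈ Set.Ioo 0 1) :
    HasDerivAt (fun x ↦ Real.log (betaPDFReal α β x)) ((α - 1) / x - (β - 1) / (1 - x)) x := by
  have hx₁ : 1 - x ≠ 0 := (sub_pos.2 hx.2).ne'
  have hlog : (fun x ↦ Real.log (betaPDFReal α β x)) =ᶠ[𝓝 x] fun x ↦
      Real.log (1 / beta α β) + (α - 1) * Real.log x + (β - 1) * Real.log (1 - x) := by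
    filter_upwards [isOpen_Ioo.mem_nhds hx] with y hy
    have hy₁ : 0 < 1 - y := sub_pos.2 hy.2
    have hbeta := (one_div_pos.2 (beta_pos hα hβ)).ne'
    have hrpow₀ := (Real.rpow_pos_of_pos hy.1 (α - 1)).ne'
    have hrpow₁ := (Real.rpow_pos_of_pos hy₁ (β - 1)).ne'
    rw [betaPDFReal, if_pos (show 0 < y ∧ y < 1 from hy),
      Real.log_mul (mul_ne_zero hbeta hrpow₀) hrpow₁, Real.log_mul hbeta hrpow₀,
      Real.log_rpow hy.1, Real.log_rpow hy₁]
  refine HasDerivAt.congr_of_eventuallyEq ?_ hlog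
  have hderiv := (((Real.hasDerivAt_log hx.1.ne').const_mul (α - 1)).const_add
    (Real.log (1 / beta α β))).add ((((hasDerivAt_id x).const_sub 1).log hx₁).const_mul (β - 1))
  refine hderiv.congr_deriv ?_
  simp only [id]
  ring

/-- The logarithm of the ratio of the Beta density at `p - s` to its value at the reflected point
`p + s`; its sign tells which side of `p` carries more mass at distance `s`. -/
def betaReflectionLogRatio (α β p s : ℝ) : ℝ :=
  Real.log (betaPDFReal α β (p - s)) - Real.log (betaPDFReal α β (p + s))

theorem betaReflectionLogRatio_zero (α β p : ℝ) : betaReflectionLogRatio α β p 0 = 0 := by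
  simp [betaReflectionLogRatio]

theorem sub_mem_Ioo_and_add_mem_Ioo (hs : s ∈ Set.Ico 0 (min p (1 - p))) :
    p - s ∈ Set.Ioo 0 1 ∧ p + s ∈ Set.Ioo 0 1 := by
  obtain ⟨hs₀, hs⟩ := hs
  rw [lt_min_iff] at hs
  refine ⟨⟨?_, ?_⟩, ?_, ?_⟩ <;> linarith

theorem betaReflectionLogRatio_nonneg_iff (hα : 0 < α) (hβ : 0 < β)
    (hs : s ∈ Set.Ico 0 (min p (1 - p))) :
    0 ≤ betaReflectionLogRatio α β p s ↔ betaPDFReal α β (p + s) ≤ betaPDFReal α β (p - s) := by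
  obtain ⟨⟨hsub₀, hsub₁⟩, hadd₀, hadd₁⟩ := sub_mem_Ioo_and_add_mem_Ioo hs
  rw [betaReflectionLogRatio, sub_nonneg, Real.log_le_log_iff
    (betaPDFReal_pos hadd₀ hadd₁ hα hβ) (betaPDFReal_pos hsub₀ hsub₁ hα hβ)]

theorem betaReflectionLogRatio_nonpos_iff (hα : 0 < α) (hβ : 0 < β)
    (hs : s ∈ Set.Ico 0 (min p (1 - p))) :
    betaReflectionLogRatio α β p s ≤ 0 ↔ betaPDFReal α β (p - s) ≤ betaPDFReal α β (p + s) := by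
  obtain ⟨⟨hsub₀, hsub₁⟩, hadd₀, hadd₁⟩ := sub_mem_Ioo_and_add_mem_Ioo hs
  rw [betaReflectionLogRatio, sub_nonpos, Real.log_le_log_iff
    (betaPDFReal_pos hsub₀ hsub₁ hα hβ) (betaPDFReal_pos hadd₀ hadd₁ hα hβ)]

/-- The factor of the derivative of `betaReflectionLogRatio α β p` in `s` that decides its sign. -/
def betaReflectionSlope (α β p s : ℝ) : ℝ :=
  p * (1 - p) * ((β - 1) * p - (α - 1) * (1 - p)) + ((α - 1) * p - (β - 1) * (1 - p)) * s ^ 2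

theorem hasDerivAt_betaReflectionLogRatio (hα : 0 < α) (hβ : 0 < β)
    (hs : s ∈ Set.Ico 0 (min p (1 - p))) :
    HasDerivAt (betaReflectionLogRatio α β p)
      (2 / ((p - s) * (p + s) * (1 - (p - s)) * (1 - (p + s))) * betaReflectionSlope α β p s)
      s := by
  obtain ⟨hsub, hadd⟩ := sub_mem_Ioo_and_add_mem_Ioo hs
  have hderiv := ((hasDerivAt_log_betaPDFReal hα hβ hsub).comp s
    ((hasDerivAt_id s).const_sub p)).sub ((hasDerivAt_log_betaPDFReal hα hβ hadd).comp s
      ((hasDerivAt_id s).const_add p))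
  refine hderiv.congr_deriv ?_
  have hsub₀ := hsub.1.ne'
  have hadd₀ := hadd.1.ne'
  have hsub₁ := (sub_pos.2 hsub.2).ne'
  have hadd₁ := (sub_pos.2 hadd.2).ne'
  rw [betaReflectionSlope]
  field_simp
  ring

theorem two_div_pos_of_mem_Ico (hs : s ∈ Set.Ico 0 (min p (1 - p))) :
    0 < 2 / ((p - s) * (p + s) * (1 - (p - s)) * (1 - (p + s))) := by
  obtain ⟨hsub, hadd⟩ := sub_mem_Ioo_and_add_mem_Ioo hs
  have hsub₀ := hsub.1
  have hadd₀ := hadd.1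
  have hsub₁ := sub_pos.2 hsub.2
  have hadd₁ := sub_pos.2 hadd.2
  positivity

theorem monotoneOn_betaReflectionLogRatio (hα : 0 < α) (hβ : 0 < β) {D : Set ℝ}
    (hD : Convex ℝ D) (hDp : D ⊆ Set.Ico 0 (min p (1 - p)))
    (hslope : ∀ s ∈ D, 0 ≤ betaReflectionSlope α β p s) :
    MonotoneOn (betaReflectionLogRatio α β p) D :=
  monotoneOn_of_hasDerivWithinAt_nonneg hD
    (fun _ hs ↦ (hasDerivAt_betaReflectionLogRatio hα hβ (hDp hs)).continuousAt.continuousWithinAt)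
    (fun _ hs ↦ (hasDerivAt_betaReflectionLogRatio hα hβ
      (hDp (interior_subset hs))).hasDerivWithinAt)
    fun s hs ↦ mul_nonneg (two_div_pos_of_mem_Ico (hDp (interior_subset hs))).le
      (hslope s (interior_subset hs))

theorem antitoneOn_betaReflectionLogRatio (hα : 0 < α) (hβ : 0 < β) {D : Set ℝ}
    (hD : Convex ℝ D) (hDp : D ⊆ Set.Ico 0 (min p (1 - p)))
    (hslope : ∀ s ∈ D, betaReflectionSlope α β p s ≤ 0) :
    AntitoneOn (betaReflectionLogRatio α β p) D :=
  antitoneOn_of_hasDerivWithinAt_nonpos hD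
    (fun _ hs ↦ (hasDerivAt_betaReflectionLogRatio hα hβ (hDp hs)).continuousAt.continuousWithinAt)
    (fun _ hs ↦ (hasDerivAt_betaReflectionLogRatio hα hβ
      (hDp (interior_subset hs))).hasDerivWithinAt)
    fun s hs ↦ mul_nonpos_of_nonneg_of_nonpos
      (two_div_pos_of_mem_Ico (hDp (interior_subset hs))).le (hslope s (interior_subset hs))

theorem betaReflectionSlope_mean (hσ : α + β ≠ 0) (s : ℝ) :
    betaReflectionSlope α β (α / (α + β)) s =
      (β - α) / (α + β) * (α * β / (α + β) ^ 2 - (α + β - 1) * s ^ 2) := by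
  rw [betaReflectionSlope]
  field_simp
  ring

theorem betaReflectionSlope_mode (hσ : α + β - 2 ≠ 0) (s : ℝ) :
    betaReflectionSlope α β ((α - 1) / (α + β - 2)) s = (α - β) * s ^ 2 := by
  rw [betaReflectionSlope]
  field_simp
  ring

theorem exists_threshold_betaReflectionLogRatio_mean (hα : 0 < α) (hαβ : α ≤ β) (hσ : 1 < α + β)
    (hp : p = α / (α + β)) (hmin : min p (1 - p) = p) :
    ∃ s₀ ∈ Set.Ioc 0 p, (∀ s, 0 < s → s < s₀ → 0 ≤ betaReflectionLogRatio α β p s) ∧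
      ∀ s, s₀ < s → s < p → betaReflectionLogRatio α β p s ≤ 0 := by
  have hβ : 0 < β := hα.trans_le hαβ
  have hσ₁ : 0 < α + β - 1 := sub_pos.2 hσ
  have hcoeff : 0 ≤ (β - α) / (α + β) := div_nonneg (sub_nonneg.2 hαβ) (by positivity)
  -- The slope changes sign at `s = c`.
  let c : ℝ := √(α * β / (α + β) ^ 2 / (α + β - 1))
  have hc : 0 < c := Real.sqrt_pos.2 (by positivity)
  have hsub (D : Set ℝ) : Set.Ico 0 p ∩ D ⊆ Set.Ico 0 (min p (1 - p)) :=
    hmin.symm ▸ Set.inter_subset_left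
  refine exists_threshold_of_monotoneOn_of_antitoneOn hc (hp ▸ by positivity)
    (betaReflectionLogRatio_zero α β p)
    (monotoneOn_betaReflectionLogRatio hα hβ ((convex_Ico 0 p).inter (convex_Iic c)) (hsub _)
      fun s ⟨hs, hsc⟩ ↦ ?_)
    (antitoneOn_betaReflectionLogRatio hα hβ ((convex_Ico 0 p).inter (convex_Ici c)) (hsub _)
      fun s ⟨hs, hcs⟩ ↦ ?_)
  · rw [hp, betaReflectionSlope_mean (by positivity)]
    refine mul_nonneg hcoeff (sub_nonneg.2 ?_)
    rw [mul_comm (α + β - 1), ← le_div_iff₀ hσ₁]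
    exact (Real.le_sqrt hs.1 (by positivity)).1 hsc
  · rw [hp, betaReflectionSlope_mean (by positivity)]
    refine mul_nonpos_of_nonneg_of_nonpos hcoeff (sub_nonpos.2 ?_)
    rw [mul_comm (α + β - 1), ← div_le_iff₀ hσ₁]
    exact (Real.sqrt_le_left hs.1).1 hcs

theorem betaMeasure_Ioi_mean_le_Iio (hα : 0 < α) (hαβ : α ≤ β) (hσ : 1 < α + β) :
    betaMeasure α β (Set.Ioi (α / (α + β))) ≤ betaMeasure α β (Set.Iio (α / (α + β))) := by
  have hβ : 0 < β := hα.trans_le hαβ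
  set p := α / (α + β) with hp
  have hp_le : p ≤ 1 - p := by
    rw [hp, one_sub_div (by positivity), add_sub_cancel_left]
    gcongr
  have hmin : min p (1 - p) = p := min_eq_left hp_le
  obtain ⟨s₀, ⟨hs₀, hs₀p⟩, hnonneg, hnonpos⟩ :=
    exists_threshold_betaReflectionLogRatio_mean hα hαβ hσ hp hmin
  refine (betaMeasure_Ioi_le_Iio_iff hα hβ).2 <| integral_sign_sub_mul_nonpos_of_crossing
    (integrable_betaPDFReal hα hβ) (integrable_sub_mul_betaPDFReal hα hβ p)
    (integral_sub_mean_mul_betaPDFReal hα hβ) hs₀ (fun s hs hlt ↦ ?_) fun s hlt ↦ ?_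
  · exact (betaReflectionLogRatio_nonneg_iff hα hβ
      ⟨hs.le, hmin.symm ▸ hlt.trans_le hs₀p⟩).1 (hnonneg s hs hlt)
  · rcases lt_or_ge s p with hsp | hps
    · exact (betaReflectionLogRatio_nonpos_iff hα hβ
        ⟨(hs₀.trans hlt).le, hmin.symm ▸ hsp⟩).1 (hnonpos s hlt hsp)
    · rw [betaPDFReal_of_nonpos (sub_nonpos.2 hps)]
      exact betaPDFReal_nonneg hα hβ _

theorem betaMeasure_Ioi_mode_le_Iio (hβ : 1 < β) (hβα : β ≤ α) :
    betaMeasure α β (Set.Ioi ((α - 1) / (α + β - 2))) ≤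
      betaMeasure α β (Set.Iio ((α - 1) / (α + β - 2))) := by
  have hβ₀ : 0 < β := by linarith
  have hα₀ : 0 < α := by linarith
  have hσ : 0 < α + β - 2 := by linarith
  set p := (α - 1) / (α + β - 2) with hp
  have hp_le : 1 - p ≤ p := by
    rw [hp, one_sub_div hσ.ne']
    exact div_le_div_of_nonneg_right (by linarith) hσ.le
  have hmin : min p (1 - p) = 1 - p := min_eq_right hp_le
  have hmono : MonotoneOn (betaReflectionLogRatio α β p) (Set.Ico 0 (1 - p)) :=
    monotoneOn_betaReflectionLogRatio hα₀ hβ₀ (convex_Ico 0 (1 - p)) (hmin.symm ▸ subset_rfl)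
      fun s _ ↦ by
        rw [betaReflectionSlope_mode hσ.ne']
        exact mul_nonneg (sub_nonneg.2 hβα) (sq_nonneg s)
  refine (betaMeasure_Ioi_le_Iio_iff hα₀ hβ₀).2 <| integral_sign_sub_mul_nonpos_of_le
    (integrable_betaPDFReal hα₀ hβ₀) fun s hs ↦ ?_
  rcases lt_or_ge s (1 - p) with hsp | hps
  · refine (betaReflectionLogRatio_nonneg_iff hα₀ hβ₀ ⟨hs.le, hmin.symm ▸ hsp⟩).1 ?_
    rw [← betaReflectionLogRatio_zero α β p]
    exact hmono ⟨le_rfl, hs.trans hsp⟩ ⟨hs.le, hsp⟩ hs.le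
  · rw [betaPDFReal_of_one_le (by linarith)]
    exact betaPDFReal_nonneg hα₀ hβ₀ _

theorem betaMeasure_real_Iio (hα : 0 < α) (hβ : 0 < β) {M : ℝ} (hM₀ : 0 ≤ M) (hM₁ : M ≤ 1) :
    (betaMeasure α β).real (Set.Iio M) =
      ∫ x in 0..M, 1 / beta α β * x ^ (α - 1) * (1 - x) ^ (β - 1) := by
  have hpdf (x : ℝ) (hx : x ∈ Set.Ioo 0 M) :
      betaPDFReal α β x = 1 / beta α β * x ^ (α - 1) * (1 - x) ^ (β - 1) :=
    if_pos ⟨hx.1, hx.2.trans_le hM₁⟩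
  have hzero (x : ℝ) (hx : x ∈ Set.Iio M \ Set.Ioo 0 M) : betaPDFReal α β x = 0 :=
    betaPDFReal_of_nonpos (not_lt.1 fun hx₀ ↦ hx.2 ⟨hx₀, hx.1⟩)
  rw [intervalIntegral.integral_of_le hM₀, integral_Ioc_eq_integral_Ioo,
    ← setIntegral_congr_fun measurableSet_Ioo hpdf,
    ← setIntegral_eq_of_subset_of_forall_sdiff_eq_zero measurableSet_Iio
      Set.Ioo_subset_Iio_self hzero,
    ← integral_indicator_one measurableSet_Iio, integral_betaMeasure hα hβ,
    ← integral_indicator measurableSet_Iio]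
  congr with x
  by_cases hx : x ∈ Set.Iio M <;> simp [hx]

theorem beta_one_right (hα : 0 < α) : beta α 1 = 1 / α := by
  have hΓ := (Real.Gamma_pos_of_pos hα).ne'
  rw [beta, Real.Gamma_one, Real.Gamma_add_one hα.ne']
  field_simp

theorem beta_one_left (hβ : 0 < β) : beta 1 β = 1 / β := by
  rw [← beta_one_right hβ, beta, beta, mul_comm, add_comm]

theorem betaMeasure_one_right_real_Iio (hα : 0 < α) {M : ℝ} (hM₀ : 0 ≤ M) (hM₁ : M ≤ 1) :
    (betaMeasure α 1).real (Set.Iio M) = M ^ α := by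
  have hα₁ : -1 < α - 1 := by linarith
  rw [betaMeasure_real_Iio hα one_pos hM₀ hM₁, beta_one_right hα]
  simp only [sub_self, Real.rpow_zero, mul_one, one_div_one_div]
  rw [intervalIntegral.integral_const_mul, integral_rpow (.inl hα₁), sub_add_cancel,
    Real.zero_rpow hα.ne', sub_zero, mul_div_cancel₀ _ hα.ne']

theorem betaMeasure_one_left_real_Iio (hβ : 0 < β) {M : ℝ} (hM₀ : 0 ≤ M) (hM₁ : M ≤ 1) :
    (betaMeasure 1 β).real (Set.Iio M) = 1 - (1 - M) ^ β := by
  have hβ₁ : -1 < β - 1 := by linarith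
  rw [betaMeasure_real_Iio one_pos hβ hM₀ hM₁, beta_one_left hβ]
  simp only [sub_self, Real.rpow_zero, mul_one, one_div_one_div]
  rw [intervalIntegral.integral_const_mul,
    intervalIntegral.integral_comp_sub_left (fun x ↦ x ^ (β - 1)), integral_rpow (.inl hβ₁),
    sub_add_cancel, sub_zero, Real.one_rpow, mul_div_cancel₀ _ hβ.ne']

theorem measure_Ioi_le_Iio_of_real_Iio_eq_half {μ : Measure ℝ} [IsProbabilityMeasure μ] {M : ℝ}
    (h : μ.real (Set.Iio M) = 1 / 2) : μ (Set.Ioi M) ≤ μ (Set.Iio M) := by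
  have hcompl : μ.real (Set.Iio M)ᶜ = 1 / 2 := by
    rw [probReal_compl_eq_one_sub measurableSet_Iio, h]
    norm_num
  calc μ (Set.Ioi M)
      ≤ μ (Set.Iio M)ᶜ := measure_mono fun x (hx : M < x) ↦ hx.not_gt
    _ = μ (Set.Iio M) := (ENNReal.toReal_eq_toReal_iff' (measure_ne_top _ _)
        (measure_ne_top _ _)).1 (hcompl.trans h.symm)

theorem betaMeasure_one_right_Ioi_le_Iio (hα : 0 < α) {M : ℝ} (hM₀ : 0 ≤ M) (hM₁ : M ≤ 1)
    (hM : M ^ α = 1 / 2) :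
    betaMeasure α 1 (Set.Ioi M) ≤ betaMeasure α 1 (Set.Iio M) :=
  have := isProbabilityMeasureBeta hα one_pos
  measure_Ioi_le_Iio_of_real_Iio_eq_half ((betaMeasure_one_right_real_Iio hα hM₀ hM₁).trans hM)

theorem betaMeasure_one_left_Ioi_le_Iio (hβ : 0 < β) {M : ℝ} (hM₀ : 0 ≤ M) (hM₁ : M ≤ 1)
    (hM : (1 - M) ^ β = 1 / 2) :
    betaMeasure 1 β (Set.Ioi M) ≤ betaMeasure 1 β (Set.Iio M) :=
  have := isProbabilityMeasureBeta one_pos hβ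
  measure_Ioi_le_Iio_of_real_Iio_eq_half <|
    (betaMeasure_one_left_real_Iio hβ hM₀ hM₁).trans (by rw [hM]; norm_num)

end BetaMedian

section BetaTransfer

open ProbabilityTheory

theorem norm_fkm_mul {m : ℝ} {k : ℕ} {z : ℂ} (hz : z ∈ UH) :
    ‖fkm m k z‖ * z.im ^ (m / 2) =
      (‖cayley z‖ ^ 2) ^ ((k : ℝ) / 2) * (1 - ‖cayley z‖ ^ 2) ^ (m / 2) := by
  have him : 0 < z.im := hz
  have hnorm : 0 < ‖z + I‖ := norm_pos_iff.2 (add_I_ne_zero hz)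
  have sq_rpow_half {x : ℝ} (hx : 0 ≤ x) (r : ℝ) : (x ^ 2) ^ (r / 2) = x ^ r := by
    rw [← Real.rpow_natCast, ← Real.rpow_mul hx]
    congr 1
    push_cast
    ring
  have hexp : (m : ℂ) + (k : ℂ) = ((m + k : ℝ) : ℂ) := by push_cast; rfl
  rw [one_sub_sq_norm_cayley hz, Real.div_rpow (by positivity) (by positivity),
    Real.mul_rpow (by norm_num) him.le, show (4 : ℝ) = 2 ^ 2 by norm_num,
    sq_rpow_half zero_le_two, sq_rpow_half hnorm.le, sq_rpow_half (norm_nonneg _),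
    Real.rpow_natCast, fkm, cayley, hexp, norm_div, norm_mul, Complex.norm_cpow_real,
    Complex.norm_cpow_real, norm_pow, norm_mul, norm_I, mul_one, Complex.norm_ofNat, norm_div,
    div_pow, Real.rpow_add hnorm, Real.rpow_natCast]
  field_simp

theorem measurable_fkm (m : ℝ) (k : ℕ) : Measurable (fkm m k) := by
  unfold fkm
  fun_prop

theorem peterssonEnorm_fkm (m : ℝ) (k : ℕ) (z : ℍ) :
    peterssonEnorm m (fkm m k) z =
      ENNReal.ofReal ((‖cayley z‖ ^ 2) ^ ((k : ℝ) / 2) * (1 - ‖cayley z‖ ^ 2) ^ (m / 2)) := by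
  rw [← norm_fkm_mul z.im_pos, ENNReal.ofReal_mul (norm_nonneg _), ofReal_norm]
  rfl

theorem ofReal_mul_ofReal_rpow_mul_rpow {a m x : ℝ} (ha : 0 ≤ a) (hm : 2 < m)
    (hx : x ∈ Set.Ioo 0 1) :
    ENNReal.ofReal (4 / (1 - x) ^ 2) * ENNReal.ofReal (x ^ a * (1 - x) ^ (m / 2)) =
      ENNReal.ofReal (4 * beta (a + 1) (m / 2 - 1)) * betaPDF (a + 1) (m / 2 - 1) x := by
  have hsub : 0 < 1 - x := sub_pos.2 hx.2
  have hbeta : 0 < beta (a + 1) (m / 2 - 1) := beta_pos (by linarith) (by linarith)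
  rw [betaPDF_of_pos_lt_one hx.1 hx.2]
  set B := beta (a + 1) (m / 2 - 1)
  rw [← ENNReal.ofReal_mul (by positivity), ← ENNReal.ofReal_mul (by positivity),
    add_sub_cancel_right, show m / 2 - 1 - 1 = m / 2 - 2 by ring, Real.rpow_sub hsub,
    Real.rpow_two]
  congr 1
  field_simp

theorem setLIntegral_peterssonEnorm_fkm {m : ℝ} (hm : 2 < m) (k : ℕ) {A : Set ℝ}
    (hA : MeasurableSet A) :
    ∫⁻ z in {z : ℍ | ‖cayley z‖ ^ 2 ∈ A}, peterssonEnorm m (fkm m k) z =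
      ENNReal.ofReal π * (ENNReal.ofReal (4 * beta (k / 2 + 1) (m / 2 - 1)) *
        betaMeasure (k / 2 + 1) (m / 2 - 1) A) := by
  let φ (x : ℝ) : ℝ≥0∞ := ENNReal.ofReal (x ^ ((k : ℝ) / 2) * (1 - x) ^ (m / 2))
  have hset : MeasurableSet {z : ℍ | ‖cayley z‖ ^ 2 ∈ A} :=
    ((measurable_cayley.comp UpperHalfPlane.measurable_coe).norm.pow_const 2) hA
  have hdensity (x : ℝ) : (Set.Ioo 0 1).indicator
      (fun x ↦ ENNReal.ofReal (4 / (1 - x) ^ 2) * A.indicator φ x) x =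
        ENNReal.ofReal (4 * beta (k / 2 + 1) (m / 2 - 1)) *
          A.indicator (betaPDF (k / 2 + 1) (m / 2 - 1)) x := by
    by_cases hxA : x ∈ A <;> by_cases hx : x ∈ Set.Ioo 0 1
    · rw [Set.indicator_of_mem hx, Set.indicator_of_mem hxA, Set.indicator_of_mem hxA,
        ofReal_mul_ofReal_rpow_mul_rpow (by positivity) hm hx]
    · rw [Set.indicator_of_notMem hx, Set.indicator_of_mem hxA, betaPDF_eq,
        if_neg (show ¬(0 < x ∧ x < 1) from hx), ENNReal.ofReal_zero, mul_zero]
    all_goals simp [hxA]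
  calc ∫⁻ z in {z : ℍ | ‖cayley z‖ ^ 2 ∈ A}, peterssonEnorm m (fkm m k) z
      = ∫⁻ z : ℍ, A.indicator φ (‖cayley z‖ ^ 2) := by
        rw [← lintegral_indicator hset]
        refine lintegral_congr fun z ↦ ?_
        by_cases hz : ‖cayley z‖ ^ 2 ∈ A
        · rw [Set.indicator_of_mem hz, Set.indicator_of_mem (by exact hz), peterssonEnorm_fkm]
        · rw [Set.indicator_of_notMem hz, Set.indicator_of_notMem (by exact hz)]
    _ = _ := by
        rw [lintegral_comp_sq_norm_cayley (Measurable.indicator (by fun_prop) hA),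
          ← lintegral_indicator measurableSet_Ioo, lintegral_congr hdensity,
          lintegral_const_mul _ ((measurable_betaPDF _ _).indicator hA), lintegral_indicator hA,
          betaMeasure, withDensity_apply _ hA]

theorem mem_ball_I_iff {R : ℝ} (hR : 0 ≤ R) (z : ℍ) :
    z ∈ Metric.ball UpperHalfPlane.I R ↔ ‖cayley z‖ ^ 2 ∈ Set.Iio (Real.tanh (R / 2) ^ 2) := by
  have htanh (x : ℝ) : Real.tanh x ∈ Set.Ioo (-1) 1 := ⟨Real.neg_one_lt_tanh x, Real.tanh_lt_one x⟩
  have hnonneg : 0 ≤ Real.tanh (R / 2) := by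
    rw [Real.tanh_eq_sinh_div_cosh]
    exact div_nonneg (Real.sinh_nonneg_iff.2 (by linarith)) (Real.cosh_pos _).le
  have hcayley : ‖cayley z‖ = Real.tanh (dist z UpperHalfPlane.I / 2) := by
    rw [UpperHalfPlane.tanh_half_dist, cayley, norm_div, Complex.dist_eq, Complex.dist_eq,
      UpperHalfPlane.coe_I, conj_I, sub_neg_eq_add]
  rw [Set.mem_Iio, sq_lt_sq₀ (norm_nonneg _) hnonneg, hcayley,
    ← Real.artanh_lt_artanh_iff (htanh _) (htanh _), Real.artanh_tanh, Real.artanh_tanh,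
    div_lt_div_iff_of_pos_right two_pos, Metric.mem_ball]

theorem div_one_add_lt_tanh_half_arsinh_sq {x y : ℝ} (hx : 0 ≤ x) (hy : 4 * √(x * (1 + x)) < y) :
    x / (1 + x) < Real.tanh (Real.arsinh (y / 2) / 2) ^ 2 := by
  set r := Real.arsinh (y / 2) / 2 with hr
  have hy_eq : y = 4 * (Real.sinh r * Real.cosh r) := by
    have hsinh : Real.sinh (2 * r) = y / 2 := by
      rw [hr, mul_div_cancel₀ _ two_ne_zero, Real.sinh_arsinh]
    rw [Real.sinh_two_mul] at hsinh
    linarith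
  have hmul : x * (1 + x) < Real.sinh r ^ 2 * (1 + Real.sinh r ^ 2) := by
    rw [add_comm 1 (Real.sinh r ^ 2), ← Real.cosh_sq, ← mul_pow]
    exact (Real.sqrt_lt' (by linarith [Real.sqrt_nonneg (x * (1 + x))])).1 (by linarith)
  have hlt : x < Real.sinh r ^ 2 := by nlinarith [sq_nonneg (Real.sinh r)]
  rw [Real.tanh_eq_sinh_div_cosh, div_pow, Real.cosh_sq,
    div_lt_div_iff₀ (by positivity) (by positivity)]
  linarith

end BetaTransfer

section Thresholds

open ProbabilityTheory

theorem eq_zero_of_isSquare_sq_add_four {N : ℕ} (h : IsSquare (N ^ 2 + 4)) : N = 0 := by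
  obtain ⟨r, hr⟩ := h
  have hlt : N < r := by nlinarith
  have hle : r ≤ N + 2 := by nlinarith
  obtain rfl | rfl : r = N + 1 ∨ r = N + 2 := by omega
  · ring_nf at hr
    omega
  · linarith

theorem four_mul_sqrt_ne_natCast {x : ℚ} (hx : 0 < x) (N : ℕ) :
    4 * √((x : ℝ) * (1 + x)) ≠ N := by
  intro h
  have : (0 : ℝ) < x := Rat.cast_pos.2 hx
  have hsq : 16 * (x * (1 + x)) = (N : ℚ) ^ 2 := by
    have hsqR : 16 * ((x : ℝ) * (1 + x)) = (N : ℝ) ^ 2 := by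
      rw [← h, mul_pow, Real.sq_sqrt (by positivity)]
      norm_num
    exact_mod_cast hsqR
  have hsquare : IsSquare ((N ^ 2 + 4 : ℕ) : ℚ) := ⟨4 * x + 2, by push_cast; linarith⟩
  rw [eq_zero_of_isSquare_sq_add_four (Rat.isSquare_natCast_iff.1 hsquare)] at hsq
  norm_num at hsq
  rcases hsq with hsq | hsq <;> linarith

theorem four_mul_sqrt_four_rpow_sub_one (e : ℝ) :
    4 * √(((4 : ℝ) ^ e - 1) * (1 + ((4 : ℝ) ^ e - 1))) = 4 * 2 ^ e * √((4 : ℝ) ^ e - 1) := by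
  have hsqrt : √((4 : ℝ) ^ e) = 2 ^ e := by
    rw [show (4 : ℝ) = 2 * 2 by norm_num, Real.mul_rpow zero_le_two zero_le_two,
      Real.sqrt_mul_self (by positivity)]
  rw [add_sub_cancel, mul_comm (_ - 1), Real.sqrt_mul (by positivity), hsqrt, mul_assoc]

theorem four_mul_sqrt_sq_div_one_sub_sq {ρ : ℝ} (hρ₀ : 0 < ρ) (hρ₁ : ρ < 1) :
    4 * √(ρ ^ 2 / (1 - ρ ^ 2) * (1 + ρ ^ 2 / (1 - ρ ^ 2))) = 4 / (ρ⁻¹ - ρ) := by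
  have hsub : 0 < 1 - ρ ^ 2 := by nlinarith
  have hsq : ρ ^ 2 / (1 - ρ ^ 2) * (1 + ρ ^ 2 / (1 - ρ ^ 2)) = (ρ / (1 - ρ ^ 2)) ^ 2 := by
    field_simp
    ring
  rw [hsq, Real.sqrt_sq (by positivity), inv_eq_one_div, div_sub' hρ₀.ne', ← sq]
  field_simp

variable {N k : ℕ} {m : ℝ}

/-- The real number `x` is a certificate that a ball of hyperbolic radius `arsinh (N / 2)` carries
more than half of the Petersson mass of `f_{k,m}`: it is small compared to `N`, and `x / (1 + x)`
is at least a median of the Beta distribution with parameters `k / 2 + 1` and `m / 2 - 1`. -/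
def IsMedianCertificate (N k : ℕ) (m x : ℝ) : Prop :=
  0 ≤ x ∧ 4 * √(x * (1 + x)) < N ∧
    betaMeasure (k / 2 + 1) (m / 2 - 1) (Set.Ioi (x / (1 + x))) ≤
      betaMeasure (k / 2 + 1) (m / 2 - 1) (Set.Iio (x / (1 + x)))

theorem isMedianCertificate_of_eq_zero (hm : 2 < m)
    (hN : 4 * (2 : ℝ) ^ (1 / (m - 2)) * √((4 : ℝ) ^ (1 / (m - 2)) - 1) < N) :
    IsMedianCertificate N 0 m ((4 : ℝ) ^ (1 / (m - 2)) - 1) := by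
  have hm₂ : 0 < m - 2 := sub_pos.2 hm
  have hbase : 1 ≤ (4 : ℝ) ^ (1 / (m - 2)) := Real.one_le_rpow (by norm_num) (by positivity)
  refine ⟨sub_nonneg.2 hbase, (four_mul_sqrt_four_rpow_sub_one _).trans_lt hN, ?_⟩
  rw [add_sub_cancel, Nat.cast_zero, zero_div, zero_add]
  refine betaMeasure_one_left_Ioi_le_Iio (by linarith)
    (div_nonneg (sub_nonneg.2 hbase) (by positivity))
    (div_le_one_of_le₀ (by linarith) (by positivity)) ?_
  have hcompl : 1 - ((4 : ℝ) ^ (1 / (m - 2)) - 1) / 4 ^ (1 / (m - 2)) = 4 ^ (-(1 / (m - 2))) := by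
    rw [Real.rpow_neg (by norm_num)]
    field_simp
    ring
  rw [hcompl, ← Real.rpow_mul (by norm_num), show -(1 / (m - 2)) * (m / 2 - 1) = -(1 / 2) by
    field_simp, Real.rpow_neg (by norm_num), ← Real.sqrt_eq_rpow,
    show (4 : ℝ) = 2 ^ 2 by norm_num, Real.sqrt_sq zero_le_two, one_div]

theorem isMedianCertificate_of_eq_four
    (hN : 4 / ((2 : ℝ) ^ (1 / ((k : ℝ) + 2)) - (2 : ℝ) ^ (-(1 / ((k : ℝ) + 2)))) < N) :
    IsMedianCertificate N k 4 (((2 : ℝ) ^ (-(1 / ((k : ℝ) + 2)))) ^ 2 /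
      (1 - ((2 : ℝ) ^ (-(1 / ((k : ℝ) + 2)))) ^ 2)) := by
  have hinv : (2 : ℝ) ^ (1 / ((k : ℝ) + 2)) = ((2 : ℝ) ^ (-(1 / ((k : ℝ) + 2))))⁻¹ := by
    rw [Real.rpow_neg zero_le_two, inv_inv]
  have hmedian : (((2 : ℝ) ^ (-(1 / ((k : ℝ) + 2)))) ^ 2) ^ ((k : ℝ) / 2 + 1) = 1 / 2 := by
    rw [← Real.rpow_natCast, ← Real.rpow_mul zero_le_two, ← Real.rpow_mul zero_le_two,
      show -(1 / ((k : ℝ) + 2)) * (2 : ℕ) * (k / 2 + 1) = -1 by push_cast; field_simp,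
      Real.rpow_neg_one, one_div]
  have hρ₁ : (2 : ℝ) ^ (-(1 / ((k : ℝ) + 2))) < 1 :=
    Real.rpow_lt_one_of_one_lt_of_neg one_lt_two (neg_neg_of_pos (by positivity))
  rw [hinv] at hN
  have hρ₀ : 0 < (2 : ℝ) ^ (-(1 / ((k : ℝ) + 2))) := by positivity
  set ρ := (2 : ℝ) ^ (-(1 / ((k : ℝ) + 2)))
  have hsub : 0 < 1 - ρ ^ 2 := by nlinarith
  refine ⟨by positivity, (four_mul_sqrt_sq_div_one_sub_sq hρ₀ hρ₁).trans_lt hN, ?_⟩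
  have hodds : ρ ^ 2 / (1 - ρ ^ 2) / (1 + ρ ^ 2 / (1 - ρ ^ 2)) = ρ ^ 2 := by
    field_simp
    ring
  rw [hodds, show (4 : ℝ) / 2 - 1 = 1 by norm_num]
  exact betaMeasure_one_right_Ioi_le_Iio (by positivity) (by positivity) (by linarith) hmedian

theorem isMedianCertificate_mean {q : ℚ} (hkq : (k : ℝ) ≤ q - 4)
    (hN : 4 * √(((k : ℝ) + 2) / (q - 2) * (1 + ((k : ℝ) + 2) / (q - 2))) ≤ N) :
    IsMedianCertificate N k q (((k : ℝ) + 2) / (q - 2)) := by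
  have : (0 : ℝ) ≤ k := k.cast_nonneg
  have hq : (0 : ℝ) < q - 2 := by linarith
  refine ⟨by positivity, hN.lt_of_ne ?_, ?_⟩
  · have hpos : 0 < ((k : ℚ) + 2) / (q - 2) := by
      have hqℚ : 0 < q - 2 := by exact_mod_cast hq
      positivity
    simpa using four_mul_sqrt_ne_natCast hpos N
  · have hmean : ((k : ℝ) + 2) / (q - 2) / (1 + (k + 2) / (q - 2)) =
        ((k : ℝ) / 2 + 1) / (k / 2 + 1 + (q / 2 - 1)) := by
      rw [one_add_div hq.ne', div_div_div_cancel_right₀ hq.ne', div_eq_div_iff (by linarith)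
        (by linarith)]
      ring
    rw [hmean]
    exact betaMeasure_Ioi_mean_le_Iio (by positivity) (by linarith) (by linarith)

theorem isMedianCertificate_mode {q : ℚ} (hq : (0 : ℝ) < q - 4) (hqk : (q : ℝ) - 4 ≤ k)
    (hN : 4 * √((k : ℝ) / (q - 4) * (1 + (k : ℝ) / (q - 4))) ≤ N) :
    IsMedianCertificate N k q ((k : ℝ) / (q - 4)) := by
  have hk : (0 : ℝ) < k := hq.trans_le hqk
  refine ⟨by positivity, hN.lt_of_ne ?_, ?_⟩
  · have hpos : 0 < (k : ℚ) / (q - 4) := by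
      have hqℚ : 0 < q - 4 := by exact_mod_cast hq
      have hkℚ : 0 < (k : ℚ) := by exact_mod_cast hk
      positivity
    simpa using four_mul_sqrt_ne_natCast hpos N
  · have hmode : (k : ℝ) / (q - 4) / (1 + k / (q - 4)) =
        ((k : ℝ) / 2 + 1 - 1) / (k / 2 + 1 + (q / 2 - 1) - 2) := by
      rw [one_add_div hq.ne', div_div_div_cancel_right₀ hq.ne', div_eq_div_iff (by linarith)
        (by linarith)]
      ring
    rw [hmode]
    exact betaMeasure_Ioi_mode_le_Iio (by linarith) (by linarith)

theorem IsMedianCertificate.setLIntegral_compl_ball_lt {x : ℝ} (h : IsMedianCertificate N k m x)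
    (hm : 2 < m) :
    ∫⁻ z in (Metric.ball UpperHalfPlane.I (Real.arsinh (N / 2)))ᶜ, peterssonEnorm m (fkm m k) z <
      ∫⁻ z in Metric.ball UpperHalfPlane.I (Real.arsinh (N / 2)),
        peterssonEnorm m (fkm m k) z := by
  obtain ⟨hx, hxN, hmedian⟩ := h
  have hα : 0 < (k : ℝ) / 2 + 1 := by positivity
  have hβ : 0 < m / 2 - 1 := by linarith
  have hR : 0 ≤ Real.arsinh (N / 2) := Real.arsinh_nonneg_iff.2 (by positivity)
  set t := Real.tanh (Real.arsinh (N / 2) / 2) ^ 2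
  have hball : Metric.ball UpperHalfPlane.I (Real.arsinh (N / 2)) =
      {z : ℍ | ‖cayley z‖ ^ 2 ∈ Set.Iio t} := Set.ext fun z ↦ mem_ball_I_iff hR z
  have hcompl : {z : ℍ | ‖cayley z‖ ^ 2 ∈ Set.Iio t}ᶜ = {z : ℍ | ‖cayley z‖ ^ 2 ∈ Set.Ici t} :=
    by rw [← Set.compl_Iio]; rfl
  have hx₁ : x / (1 + x) < 1 := (div_lt_one (by positivity)).2 (by linarith)
  have hlt := betaMeasure_Ici_lt_Iio hα hβ (by positivity) hx₁
    (div_one_add_lt_tanh_half_arsinh_sq hx hxN) hmedian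
  rw [hball, hcompl, setLIntegral_peterssonEnorm_fkm hm k measurableSet_Ici,
    setLIntegral_peterssonEnorm_fkm hm k measurableSet_Iio, ← mul_assoc, ← mul_assoc,
    ENNReal.mul_lt_mul_iff_right]
  · exact hlt
  · have := beta_pos hα hβ
    positivity
  · finiteness

end Thresholds

theorem le_Gamma_of_dvd {N : ℕ} {Γ : Subgroup SL2Z}
    (h : ∀ γ : Γ,
      (N : ℤ) ∣ (((γ : SL2Z) : Matrix (Fin 2) (Fin 2) ℤ) 0 0 - 1) ∧
      (N : ℤ) ∣ (((γ : SL2Z) : Matrix (Fin 2) (Fin 2) ℤ) 0 1) ∧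
      (N : ℤ) ∣ (((γ : SL2Z) : Matrix (Fin 2) (Fin 2) ℤ) 1 0) ∧
      (N : ℤ) ∣ (((γ : SL2Z) : Matrix (Fin 2) (Fin 2) ℤ) 1 1 - 1)) :
    Γ ≤ CongruenceSubgroup.Gamma N := by
  intro γ hγ
  obtain ⟨h₀₀, h₀₁, h₁₀, h₁₁⟩ := h ⟨γ, hγ⟩
  rw [← ZMod.intCast_zmod_eq_zero_iff_dvd, Int.cast_sub, Int.cast_one, sub_eq_zero] at h₀₀ h₁₁
  rw [← ZMod.intCast_zmod_eq_zero_iff_dvd] at h₀₁ h₁₀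
  exact CongruenceSubgroup.Gamma_mem.2 ⟨h₀₀, h₀₁, h₁₀, h₁₁⟩

theorem HasFiniteOrderChar.norm_eq_one {Γ : Subgroup SL2Z} {χ : Γ →* ℂˣ}
    (h : HasFiniteOrderChar Γ χ) (γ : Γ) : ‖(χ γ : ℂ)‖ = 1 := by
  obtain ⟨n, hn, hpow⟩ := h
  exact norm_eq_one_of_pow_eq_one (by rw [← Units.val_pow_eq_pow_val, hpow, Units.val_one]) hn.ne'

theorem stmt5_general {N : ℕ} {Γ : Subgroup SL2Z} (hΓ : Γ ≤ CongruenceSubgroup.Gamma N)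
    {η : Γ → ℂ → ℂ} (hη : IsMultiplierSystem Γ η)
    {χ : Γ →* ℂˣ} (hχ : ∀ γ, ‖(χ γ : ℂ)‖ = 1)
    {m : ℝ} {n : ℤ} (hn : (n : ℝ) = 2 * m) (hm : 2 < m) {k : ℕ}
    (hcase :
      (k = 0 ∧ (N : ℝ) > 4 * (2 : ℝ) ^ (1 / (m - 2)) * √((4 : ℝ) ^ (1 / (m - 2)) - 1)) ∨
      (m = 4 ∧ (N : ℝ) > 4 / ((2 : ℝ) ^ (1 / ((k : ℝ) + 2)) - (2 : ℝ) ^ (-(1 / ((k : ℝ) + 2))))) ∨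
      ((k : ℝ) ≤ m - 4 ∧
        (N : ℝ) ≥ 4 * √((((k : ℝ) + 2) / (m - 2)) * (1 + ((k : ℝ) + 2) / (m - 2)))) ∨
      (0 < m - 4 ∧ m - 4 ≤ (k : ℝ) ∧
        (N : ℝ) ≥ 4 * √(((k : ℝ) / (m - 4)) * (1 + (k : ℝ) / (m - 4))))) :
    ∃ z ∈ UH, poincareSeries Γ η χ n (fkm m k) z ≠ 0 := by
  obtain ⟨q, rfl⟩ : ∃ q : ℚ, (q : ℝ) = m := ⟨n / 2, by push_cast; linarith⟩
  obtain ⟨x, hx⟩ : ∃ x, IsMedianCertificate N k q x := by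
    rcases hcase with ⟨rfl, hN⟩ | ⟨hq, hN⟩ | ⟨hkq, hN⟩ | ⟨hq, hqk, hN⟩
    · exact ⟨_, isMedianCertificate_of_eq_zero hm hN⟩
    · exact ⟨_, hq ▸ isMedianCertificate_of_eq_four hN⟩
    · exact ⟨_, isMedianCertificate_mean hkq hN⟩
    · exact ⟨_, isMedianCertificate_mode hq hqk hN⟩
  exact hη.exists_poincareSeries_ne_zero hχ hn (measurable_fkm q k) Metric.isOpen_ball.measurableSet
    (fun γ hγ ↦ hη.disjoint_smul_ball hΓ hγ) (hx.setLIntegral_compl_ball_lt hm)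

theorem stmt5 (N : ℕ) (hN : 0 < N) (Γ : Subgroup SL2Z) (hΓ : Γ.FiniteIndex)
    (hcong : ∀ γ : Γ,
      (N : ℤ) ∣ (((γ : SL2Z) : Matrix (Fin 2) (Fin 2) ℤ) 0 0 - 1) ∧
      (N : ℤ) ∣ (((γ : SL2Z) : Matrix (Fin 2) (Fin 2) ℤ) 0 1) ∧
      (N : ℤ) ∣ (((γ : SL2Z) : Matrix (Fin 2) (Fin 2) ℤ) 1 0) ∧
      (N : ℤ) ∣ (((γ : SL2Z) : Matrix (Fin 2) (Fin 2) ℤ) 1 1 - 1))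
    (η : Γ → ℂ → ℂ) (hη : IsMultiplierSystem Γ η)
    (χ : Γ →* ℂˣ) (hχ : HasFiniteOrderChar Γ χ)
    (m : ℝ) (j : ℕ) (hm : m = 5 / 2 + j)
    (hmI : ∀ γ : Γ, ((γ : SL2Z) : Matrix (Fin 2) (Fin 2) ℤ) = -1 →
      (χ γ : ℂ) = η γ I ^ (-(5 + 2 * (j : ℤ)))) (k : ℕ)
    (hcase :
      (k = 0 ∧ (N : ℝ) > 4 * (2 : ℝ) ^ (1 / (m - 2)) * Real.sqrt ((4 : ℝ) ^ (1 / (m - 2)) - 1)) ∨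
      (m = 4 ∧ (N : ℝ) > 4 / ((2 : ℝ) ^ (1 / ((k : ℝ) + 2)) - (2 : ℝ) ^ (-(1 / ((k : ℝ) + 2))))) ∨
      (0 < k ∧ (k : ℝ) ≤ m - 4 ∧
        (N : ℝ) ≥ 4 * Real.sqrt ((((k : ℝ) + 2) / (m - 2)) * (1 + ((k : ℝ) + 2) / (m - 2)))) ∨
      (0 < m - 4 ∧ m - 4 ≤ (k : ℝ) ∧
        (N : ℝ) ≥ 4 * Real.sqrt (((k : ℝ) / (m - 4)) * (1 + (k : ℝ) / (m - 4))))) :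
    ∃ z ∈ UH, PoincareP Γ η χ m j k z ≠ 0 := by
  exact stmt5_general (le_Gamma_of_dvd hcong) hη hχ.norm_eq_one (n := 5 + 2 * j)
    (by push_cast; linarith) (by linarith [(Nat.cast_nonneg j : (0 : ℝ) ≤ j)])
    (hcase.imp_right (Or.imp_right (Or.imp_left And.right)))
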